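/- arXiv:1308.6650 — 2 statements merged into one kernel-verified Lean document; each statement's English description precedes it below -/
import Mathlib

section
/- Suppose 1 < |a_1⋯a_{n+1} b_1⋯b_{n+1}| (so |u| < q), fix i ∈ {1,…,n+1}, and assume a_j b_k ∉ qᶻ for all 1 ≤ j ≤ n+1 and all k ≠ i, and b_k/b_l ∉ qᶻ for all k ≠ l with k, l ≠ i (and that the same nondegeneracy conditions hold after the shift below). Then for every j ∈ {1,…,n+1}: replacing a_j by q a_j throughout (so that u becomes u/q) multiplies the regularization 𝒥̄_i by ∏_{k=1}^{n+1} (1 − a_j⁻¹ b_k⁻¹) / (1 − a_1⁻¹⋯a_{n+1}⁻¹ b_1⁻¹⋯b_{n+1}⁻¹), and replacing b_j by q b_j throughout (so that u becomes u/q) multiplies 𝒥̄_i by ∏_{k=1}^{n+1} (1 − a_k⁻¹ b_j⁻¹) / (1 − a_1⁻¹⋯a_{n+1}⁻¹ b_1⁻¹⋯b_{n+1}⁻¹). (q-difference equations for the regularized truncated dual Dixon–Anderson sum; Proposition 4.3 of the paper.) -/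
/-!
Since the summand contains the Vandermonde product of the lattice points `z_k = β_k q ^ ν_k`, the
`n`-fold series is, up to a constant, the `n × n` determinant of the one-variable moments
`⟨z ^ l⟩_k = ∑ ν, w(β_k q ^ ν) (β_k q ^ ν) ^ l`, `0 ≤ l < n` (`jbarSum_eq_det`).

Telescoping `w(z) z⁻¹ ∏ (1 - z / b_j)` along each lattice gives one and the same linear relation
`⟨F(z) / z⟩_k = 0` for every `k`, with `F(z) = ∏ (1 - z / b_j) - (∏ a_j b_j)⁻¹ ∏ (1 - a_j z)`
(`mom_relation`); there is no boundary term because `β_k` is one of the `b_j`. The balancing of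
`u` makes the coefficients of degree `n + 1` cancel, so `F` has degree at most `n`, and
`F(0) = 1 - (∏ a_j b_j)⁻¹`.

Each parameter shift replaces, up to a scalar for each lattice, the weight `w(z)` by
`w(z) (1 - c z) / z` with `c = a_j` or `c = 1 / b_j`. Modulo the relation `F(z) / z`, the
determinant gets multiplied by `(-c) ^ n F(1/c) / F(0)` (`det_moment_shift`, `jbarSum_shift`), and
`F(1/c)` is explicit since one of the two products in `F` vanishes there. When the shifted `b_j` is
one of the base points, the lattice starts one step later, which loses nothing because `1 - z / b_j`
vanishes at `z = b_j`. The quasi-periodicity `θ(q x) = -θ(x) / x` absorbs the scalars. No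
nonvanishing of the infinite products is required: only `1 - a_j z ≠ 0` on the lattices.
-/

open scoped BigOperators
open Finset

/-- The infinite q-Pochhammer symbol `(a)_∞ = ∏_{i=0}^∞ (1 - qⁱ a)`. -/
noncomputable def qp (q a : ℂ) : ℂ := ∏' i : ℕ, (1 - q ^ i * a)

/-- The theta function `θ(a) = (a)_∞ (q/a)_∞`. -/
noncomputable def th (q a : ℂ) : ℂ := qp q a * qp q (q / a)

/-- Summand of the truncated dual Jackson integral of Dixon–Anderson type `J̄(b̂ᵢ)`,
with `u = q a₁⁻¹⋯a_{n+1}⁻¹ b₁⁻¹⋯b_{n+1}⁻¹` and `β = b ∘ i.succAbove`. -/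
noncomputable def jbarTerm {n : ℕ} (q : ℂ) (a b : Fin (n + 1) → ℂ) (i : Fin (n + 1))
    (ν : Fin n → ℕ) : ℂ :=
  (q * (∏ j, a j)⁻¹ * (∏ j, b j)⁻¹) ^ (∑ k, ν k) *
    (∏ k, ∏ j, qp q (q * (b j)⁻¹ * (b (i.succAbove k) * q ^ ν k)) /
        qp q (a j * (b (i.succAbove k) * q ^ ν k))) *
    ∏ k, ∏ l ∈ Finset.Ioi k, (b (i.succAbove k) * q ^ ν k - b (i.succAbove l) * q ^ ν l)

/-- The truncated dual Jackson integral of Dixon–Anderson type `J̄(b̂ᵢ)`. -/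
noncomputable def jbarSum {n : ℕ} (q : ℂ) (a b : Fin (n + 1) → ℂ) (i : Fin (n + 1)) : ℂ :=
  (1 - q) ^ n * ∑' ν : Fin n → ℕ, jbarTerm q a b i ν

/-- The regularization `𝒥̄ᵢ` of the truncated dual Dixon–Anderson sum. -/
noncomputable def jbarReg {n : ℕ} (q : ℂ) (a b : Fin (n + 1) → ℂ) (i : Fin (n + 1)) : ℂ :=
  jbarSum q a b i * (∏ k : Fin n, ∏ j, th q (a j * b (i.succAbove k))) /
    ∏ k : Fin n, ∏ l ∈ Finset.Ioi k,
      b (i.succAbove k) * th q (b (i.succAbove l) / b (i.succAbove k))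

/-! ### Functional equations of the infinite products -/

lemma multipliable_qp {q : ℂ} (hq : ‖q‖ < 1) (x : ℂ) :
    Multipliable fun i : ℕ => 1 - q ^ i * x := by
  have h : Summable fun i : ℕ => ‖-(q ^ i * x)‖ := by
    simp only [norm_neg, norm_mul, norm_pow]
    exact (summable_geometric_of_lt_one (norm_nonneg _) hq).mul_right _
  simpa [sub_eq_add_neg] using multipliable_one_add_of_summable h

lemma qp_step {q : ℂ} (hq : ‖q‖ < 1) (x : ℂ) : qp q x = (1 - x) * qp q (q * x) := by
  have e : (fun i : ℕ => 1 - q ^ (i + 1) * x) = fun i : ℕ => 1 - q ^ i * (q * x) := by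
    funext i
    ring
  have h : Multipliable fun i : ℕ => 1 - q ^ (i + 1) * x := e ▸ multipliable_qp hq (q * x)
  have h2 := tprod_eq_zero_mul' (f := fun i : ℕ => 1 - q ^ i * x) h
  rw [e, pow_zero, one_mul] at h2
  exact h2

lemma th_step {q : ℂ} (hq : ‖q‖ < 1) (hq0 : q ≠ 0) {x : ℂ} (hx : x ≠ 0) :
    th q (q * x) = -x⁻¹ * th q x := by
  unfold th
  rw [qp_step hq x, show q / (q * x) = x⁻¹ by field_simp, qp_step hq x⁻¹, ← div_eq_mul_inv q x]
  field_simp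
  ring

/-! ### Products of one-variable series, and determinants -/

/-- Absolutely convergent one-variable series multiply to a series over `Fin n → ℕ`. -/
lemma hasSum_prod_pi {n : ℕ} (f : Fin n → ℕ → ℂ) (hf : ∀ k, Summable (f k)) :
    (Summable fun ν : Fin n → ℕ => ‖∏ k, f k (ν k)‖) ∧
      HasSum (fun ν : Fin n → ℕ => ∏ k, f k (ν k)) (∏ k, ∑' m, f k m) := by
  induction n with
  | zero =>
    refine ⟨(hasSum_fintype _).summable, ?_⟩
    simp
  | succ n ih =>
    obtain ⟨h1, h2⟩ := ih (fun k => f k.succ) (fun k => hf _)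
    let e := Fin.consEquiv (fun _ : Fin (n + 1) => ℕ)
    have h3 := Summable.mul_norm (hf 0).norm h1
    have key : ∀ p : ℕ × (Fin n → ℕ), ∏ k, f k (e p k) = f 0 p.1 * ∏ k, f k.succ (p.2 k) := by
      intro p
      rw [Fin.prod_univ_succ]
      simp [e, Fin.consEquiv]
    constructor
    · rw [← e.summable_iff]
      refine h3.congr fun p => ?_
      simp only [Function.comp, key]
    · rw [← e.hasSum_iff, Fin.prod_univ_succ, ← h2.tsum_eq,
        tsum_mul_tsum_of_summable_norm (hf 0).norm h1]
      convert! (Summable.of_norm h3).hasSum using 1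
      funext p
      exact key p

/-- A multiple series against a Vandermonde product is a determinant of one-variable moments. -/
lemma tsum_vandermonde {n : ℕ} (w z : Fin n → ℕ → ℂ)
    (h : ∀ k l, l < n → Summable fun m => w k m * z k m ^ l) :
    ∑' ν : Fin n → ℕ, (∏ k, w k (ν k)) * ∏ k, ∏ l ∈ Finset.Ioi k, (z k (ν k) - z l (ν l)) =
      (∏ k : Fin n, ∏ _l ∈ Finset.Ioi k, (-1 : ℂ)) *
        (Matrix.of fun k l : Fin n => ∑' m, w k m * z k m ^ (l : ℕ)).det := by
  have e1 : ∀ ν : Fin n → ℕ,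
      (∏ k, w k (ν k)) * ∏ k, ∏ l ∈ Finset.Ioi k, (z k (ν k) - z l (ν l)) =
      (∏ k : Fin n, ∏ _l ∈ Finset.Ioi k, (-1 : ℂ)) * ∑ σ : Equiv.Perm (Fin n),
        ((Equiv.Perm.sign σ : ℤ) : ℂ) * ∏ k, (w k (ν k) * z k (ν k) ^ (σ k : ℕ)) := by
    intro ν
    have : ∏ k, ∏ l ∈ Finset.Ioi k, (z k (ν k) - z l (ν l)) =
        (∏ k : Fin n, ∏ _l ∈ Finset.Ioi k, (-1 : ℂ)) *
          (Matrix.vandermonde fun k => z k (ν k)).det := by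
      rw [Matrix.det_vandermonde, ← Finset.prod_mul_distrib]
      refine Finset.prod_congr rfl fun k _ => ?_
      rw [← Finset.prod_mul_distrib]
      exact Finset.prod_congr rfl fun l _ => by ring
    rw [this, ← Matrix.det_transpose, Matrix.det_apply', mul_left_comm, Finset.mul_sum]
    congr 1
    refine Finset.sum_congr rfl fun σ _ => ?_
    rw [Finset.prod_mul_distrib]
    simp only [Matrix.transpose_apply, Matrix.vandermonde_apply]
    ring
  have e2 : ∀ σ : Equiv.Perm (Fin n), HasSum
      (fun ν : Fin n → ℕ => ((Equiv.Perm.sign σ : ℤ) : ℂ) * ∏ k, (w k (ν k) * z k (ν k) ^ (σ k : ℕ)))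
      (((Equiv.Perm.sign σ : ℤ) : ℂ) * ∏ k, ∑' m, w k m * z k m ^ (σ k : ℕ)) := fun σ =>
    (hasSum_prod_pi (fun k m => w k m * z k m ^ (σ k : ℕ)) fun k => h k _ (σ k).2).2.mul_left _
  simp_rw [e1]
  rw [((hasSum_sum fun σ _ => e2 σ).mul_left _).tsum_eq, ← Matrix.det_transpose, Matrix.det_apply']
  rfl

/-- If the moments `m k 0, …, m k n` all satisfy the same linear relation with coefficients `F`,
then passing from `m k (l + 1)` to `m k l - c * m k (l + 1)` multiplies the determinant by
`(-c) ^ n * F(1/c) / F(0)`. The transition matrix is `(1 + v ⊗ y) * A`, with `A` bidiagonal upper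
triangular, `v` the vector expressing `m k 0` through the other moments and `y` the solution of
`y * A = e₀`. -/
lemma det_moment_shift {n : ℕ} (m : Fin n → ℕ → ℂ) (F : ℕ → ℂ) {c : ℂ} (hc : c ≠ 0)
    (hF : F 0 ≠ 0) (h : ∀ k, ∑ l ∈ Finset.range (n + 1), F l * m k l = 0) :
    (Matrix.of fun k l : Fin n => m k l - c * m k (l + 1)).det * F 0 =
      (-c) ^ n * (∑ l ∈ Finset.range (n + 1), F l * (c⁻¹) ^ l) *
        (Matrix.of fun k l : Fin n => m k (l + 1)).det := by
  let N : Matrix (Fin n) (Fin n) ℂ := Matrix.of fun k l : Fin n => m k (l + 1)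
  let A : Matrix (Fin n) (Fin n) ℂ := Matrix.of fun l' l : Fin n =>
    (if (l' : ℕ) + 1 = l then 1 else 0) - (if l' = l then c else 0)
  let v : Fin n → ℂ := fun l => -(F (l + 1) / F 0)
  let y : Fin n → ℂ := fun l => -(c⁻¹) ^ ((l : ℕ) + 1)
  have hA : A.det = (-c) ^ n := by
    rw [Matrix.det_of_isUpperTriangular]
    · simp [A]
    · intro l' l hl
      have : (l : ℕ) < l' := hl
      simp only [A, Matrix.of_apply]
      rw [if_neg (by omega), if_neg (by intro h; subst h; omega), sub_zero]
  have hcol : ∀ (f : ℕ → ℂ) (l : Fin n), ∑ l' : Fin n, f (l' + 1) * A l' l =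
      (if (l : ℕ) = 0 then 0 else f l) - c * f (l + 1) := by
    intro f l
    simp only [A, Matrix.of_apply, mul_sub, Finset.sum_sub_distrib, mul_ite, mul_one, mul_zero]
    congr 1
    · split_ifs with h0
      · exact Finset.sum_eq_zero fun l' _ => if_neg (by omega)
      · rw [Finset.sum_eq_single (⟨l - 1, by omega⟩ : Fin n)]
        · simp only
          rw [if_pos (by omega)]
          congr 1
          omega
        · intro l' _ hne
          refine if_neg fun he => hne (Fin.ext ?_)
          simp only
          omega
        · simp
    · simp [mul_comm]
  have hv : ∀ k, ∑ l : Fin n, m k (l + 1) * v l = m k 0 := by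
    intro k
    have := h k
    rw [Finset.sum_range_succ', Finset.sum_range] at this
    have e : ∑ l : Fin n, m k (l + 1) * v l = -(∑ l : Fin n, F (l + 1) * m k (l + 1)) / F 0 := by
      rw [neg_div, Finset.sum_div, ← Finset.sum_neg_distrib]
      exact Finset.sum_congr rfl fun l _ => by simp only [v]; ring
    rw [e, div_eq_iff hF]
    linear_combination -this
  have hy : ∀ l : Fin n, ∑ l' : Fin n, y l' * A l' l = if (l : ℕ) = 0 then 1 else 0 := by
    intro l
    rw [hcol (fun j => -(c⁻¹) ^ j) l]
    split_ifs with h0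
    · simp [h0, hc]
    · rw [pow_succ]
      field_simp
      ring
  have hfac : (Matrix.of fun k l : Fin n => m k l - c * m k (l + 1)) =
      N * ((1 + Matrix.replicateCol Unit v * Matrix.replicateRow Unit y) * A) := by
    ext k l
    have e : N * ((1 + Matrix.replicateCol Unit v * Matrix.replicateRow Unit y) * A) =
        N * A + (N * Matrix.replicateCol Unit v) * (Matrix.replicateRow Unit y * A) := by
      simp only [add_mul, mul_add, one_mul, Matrix.mul_assoc]
    rw [e, Matrix.add_apply]
    simp only [Matrix.mul_apply, Finset.univ_unique, Finset.sum_singleton,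
      Matrix.replicateCol_apply, Matrix.replicateRow_apply, N, Matrix.of_apply]
    rw [hcol (m k), hv, hy]
    split_ifs with h0
    · rw [h0]; ring
    · ring
  have hdot : (1 + y ⬝ᵥ v) * F 0 = ∑ l ∈ Finset.range (n + 1), F l * (c⁻¹) ^ l := by
    rw [Finset.sum_range_succ', Finset.sum_range, add_mul, dotProduct, Finset.sum_mul, add_comm]
    congr 1
    · refine Finset.sum_congr rfl fun l _ => ?_
      simp only [y, v]
      field_simp
    · simp
  rw [hfac, Matrix.det_mul, Matrix.det_mul, Matrix.det_one_add_replicateCol_mul_replicateRow, hA,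
    ← hdot]
  ring

/-! ### The one-variable weight and its moments -/

/-- The one-variable weight at the lattice point `x * q ^ ν`. The summand `jbarTerm` is a product
of such weights, based at the points `b (i.succAbove k)`, times a Vandermonde product. -/
noncomputable def wt {n : ℕ} (q : ℂ) (a b : Fin (n + 1) → ℂ) (x : ℂ) (ν : ℕ) : ℂ :=
  (q * (∏ j, a j)⁻¹ * (∏ j, b j)⁻¹) ^ ν *
    ∏ j, qp q (q * (b j)⁻¹ * (x * q ^ ν)) / qp q (a j * (x * q ^ ν))

/-- The moment of order `l - 1` of the weight `wt`; the index is shifted by one because the moment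
of order `-1` is needed. -/
noncomputable def mom {n : ℕ} (q : ℂ) (a b : Fin (n + 1) → ℂ) (x : ℂ) (l : ℕ) : ℂ :=
  ∑' ν : ℕ, wt q a b x ν * ((x * q ^ ν) ^ l / (x * q ^ ν))

/-- The polynomial `F(z) = ∏ (1 - z / b_j) - (∏ a_j b_j)⁻¹ ∏ (1 - a_j z)`, which satisfies
`⟨F(z) / z⟩ = 0` for the weight `wt`. -/
noncomputable def relPoly {n : ℕ} (a b : Fin (n + 1) → ℂ) : Polynomial ℂ :=
  ∏ j, (1 - Polynomial.C (b j)⁻¹ * Polynomial.X) -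
    Polynomial.C ((∏ j, a j)⁻¹ * (∏ j, b j)⁻¹) * ∏ j, (1 - Polynomial.C (a j) * Polynomial.X)

lemma relPoly_eval {n : ℕ} (a b : Fin (n + 1) → ℂ) (z : ℂ) :
    (relPoly a b).eval z =
      ∏ j, (1 - (b j)⁻¹ * z) - (∏ j, a j)⁻¹ * (∏ j, b j)⁻¹ * ∏ j, (1 - a j * z) := by
  simp [relPoly, Polynomial.eval_prod]

lemma natDegree_one_sub_C_mul_X_le (c : ℂ) :
    (1 - Polynomial.C c * Polynomial.X : Polynomial ℂ).natDegree ≤ 1 := by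
  compute_degree

/-- The coefficients of degree `n + 1` cancel in `relPoly`. -/
lemma relPoly_natDegree {n : ℕ} (a b : Fin (n + 1) → ℂ) (ha : ∀ j, a j ≠ 0) :
    (relPoly a b).natDegree < n + 1 := by
  have hdeg : ∀ c : Fin (n + 1) → ℂ,
      (∏ j, (1 - Polynomial.C (c j) * Polynomial.X)).natDegree ≤ n + 1 := by
    intro c
    refine (Polynomial.natDegree_prod_le _ _).trans ?_
    refine (Finset.sum_le_sum fun j _ => natDegree_one_sub_C_mul_X_le (c j)).trans ?_
    simp
  have hcoeff : ∀ c : Fin (n + 1) → ℂ,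
      (∏ j, (1 - Polynomial.C (c j) * Polynomial.X)).coeff (n + 1) = ∏ j, (-c j) := by
    intro c
    have := Polynomial.coeff_prod_of_natDegree_le (s := Finset.univ)
      (fun j => (1 - Polynomial.C (c j) * Polynomial.X)) 1
      (fun j _ => natDegree_one_sub_C_mul_X_le (c j))
    simp only [Finset.card_univ, Fintype.card_fin, mul_one] at this
    rw [this]
    refine Finset.prod_congr rfl fun j _ => ?_
    simp [Polynomial.coeff_one]
  have hle : (relPoly a b).natDegree ≤ n + 1 := by
    unfold relPoly
    refine (Polynomial.natDegree_sub_le _ _).trans (max_le (hdeg _) ?_)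
    exact (Polynomial.natDegree_C_mul_le _ _).trans (hdeg a)
  have h0 : (relPoly a b).coeff (n + 1) = 0 := by
    unfold relPoly
    rw [Polynomial.coeff_sub, Polynomial.coeff_C_mul, hcoeff, hcoeff]
    have hA : (∏ j, a j) ≠ 0 := Finset.prod_ne_zero_iff.2 fun j _ => ha j
    simp only [Finset.prod_neg, Finset.prod_inv_distrib]
    field_simp
    ring
  refine lt_of_le_of_ne hle fun he => ?_
  have h1 : (relPoly a b).leadingCoeff = 0 := by
    rw [Polynomial.leadingCoeff, he, h0]
  rw [Polynomial.leadingCoeff_eq_zero] at h1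
  rw [h1] at he
  simp at he

/-- The `q`-difference equation of the weight along the lattice. -/
lemma wt_step {n : ℕ} {q : ℂ} (hq : ‖q‖ < 1) (a b : Fin (n + 1) → ℂ) (x : ℂ)
    (hx : ∀ j (ν : ℕ), 1 - a j * (x * q ^ ν) ≠ 0) (ν : ℕ) :
    wt q a b x (ν + 1) * ∏ j, (1 - (b j)⁻¹ * (x * q ^ (ν + 1))) =
      q * (∏ j, a j)⁻¹ * (∏ j, b j)⁻¹ * (∏ j, (1 - a j * (x * q ^ ν))) * wt q a b x ν := by
  unfold wt
  have key : ∀ j, qp q (q * (b j)⁻¹ * (x * q ^ (ν + 1))) / qp q (a j * (x * q ^ (ν + 1))) *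
      (1 - (b j)⁻¹ * (x * q ^ (ν + 1))) =
      (1 - a j * (x * q ^ ν)) *
        (qp q (q * (b j)⁻¹ * (x * q ^ ν)) / qp q (a j * (x * q ^ ν))) := by
    intro j
    rw [qp_step hq (q * (b j)⁻¹ * (x * q ^ ν)), qp_step hq (a j * (x * q ^ ν)),
      show q * (q * (b j)⁻¹ * (x * q ^ ν)) = q * (b j)⁻¹ * (x * q ^ (ν + 1)) by ring,
      show q * (a j * (x * q ^ ν)) = a j * (x * q ^ (ν + 1)) by ring,
      ← div_div, mul_div_assoc', mul_div_cancel₀ _ (hx j ν)]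
    ring
  rw [mul_assoc, ← Finset.prod_mul_distrib, Finset.prod_congr rfl fun j _ => key j,
    Finset.prod_mul_distrib]
  ring

lemma tendsto_lattice {q : ℂ} (hq : ‖q‖ < 1) {n : ℕ} (c : Fin (n + 1) → ℂ) (x : ℂ) :
    Filter.Tendsto (fun ν : ℕ => ∏ j, (1 - c j * (x * q ^ ν))) Filter.atTop (nhds 1) := by
  have h : ∀ j ∈ (Finset.univ : Finset (Fin (n + 1))),
      Filter.Tendsto (fun ν : ℕ => 1 - c j * (x * q ^ ν)) Filter.atTop (nhds 1) := by
    intro j _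
    simpa using (((tendsto_pow_atTop_nhds_zero_of_norm_lt_one hq).const_mul x).const_mul
      (c j)).const_sub 1
  simpa using tendsto_finsetProd _ h

/-- Absolute convergence of all moments of order at least `-1`, by the ratio test: the ratio of
consecutive terms tends to `q ^ l / ∏ a_j b_j`. -/
lemma summable_mom {n : ℕ} {q : ℂ} (hq : ‖q‖ < 1) (hq0 : q ≠ 0) (a b : Fin (n + 1) → ℂ)
    (hbal : ‖(∏ j, a j)⁻¹ * (∏ j, b j)⁻¹‖ < 1) {x : ℂ} (hx0 : x ≠ 0)
    (hx : ∀ j (ν : ℕ), 1 - a j * (x * q ^ ν) ≠ 0) (l : ℕ) :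
    Summable fun ν : ℕ => wt q a b x ν * ((x * q ^ ν) ^ l / (x * q ^ ν)) := by
  obtain ⟨r, hr1, hr2⟩ := exists_between hbal
  have hr0 : 0 ≤ r := (norm_nonneg _).trans hr1.le
  have hA := (tendsto_lattice hq a x).norm.const_mul ‖(∏ j, a j)⁻¹ * (∏ j, b j)⁻¹‖
  have hB := ((tendsto_lattice hq (fun j => (b j)⁻¹) x).comp (Filter.tendsto_add_atTop_nat 1)).norm
  have hrB := hB.const_mul r
  simp only [norm_one, mul_one] at hA hB hrB
  refine summable_of_ratio_norm_eventually_le hr2 ?_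
  filter_upwards [hA.eventually_lt hrB hr1, hB.eventually_const_lt zero_lt_one] with ν h1 h2
  simp only [Function.comp] at h1 h2
  have hs := wt_step hq a b x hx ν
  have hql : ‖q ^ l‖ ≤ 1 := by
    rw [norm_pow]
    exact pow_le_one₀ (norm_nonneg _) hq.le
  set A := ∏ j, (1 - a j * (x * q ^ ν))
  set B := ∏ j, (1 - (b j)⁻¹ * (x * q ^ (ν + 1)))
  set s := wt q a b x ν * ((x * q ^ ν) ^ l / (x * q ^ ν)) with hs_def
  set s' := wt q a b x (ν + 1) * ((x * q ^ (ν + 1)) ^ l / (x * q ^ (ν + 1))) with hs'_def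
  have e : s' * B = ((∏ j, a j)⁻¹ * (∏ j, b j)⁻¹) * A * s * q ^ l := by
    have : s' * B = (wt q a b x (ν + 1) * B) * ((x * q ^ (ν + 1)) ^ l / (x * q ^ (ν + 1))) := by
      rw [hs'_def]
      ring
    rw [this, hs, hs_def, show x * q ^ (ν + 1) = (x * q ^ ν) * q by ring, mul_pow]
    field_simp
  refine le_of_mul_le_mul_right ?_ h2
  calc ‖s'‖ * ‖B‖ = (‖(∏ j, a j)⁻¹ * (∏ j, b j)⁻¹‖ * ‖A‖) * ‖s‖ * ‖q ^ l‖ := by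
        rw [← norm_mul, e]
        simp only [norm_mul]
    _ ≤ (r * ‖B‖) * ‖s‖ * 1 := by gcongr
    _ = r * ‖s‖ * ‖B‖ := by ring

/-- The linear relation `⟨F(z) / z⟩ = 0`, for a lattice based at one of the `b j`. The series
telescopes, and the boundary term vanishes since the factor `1 - z / b_j` does at `z = b_j`. -/
lemma mom_relation {n : ℕ} {q : ℂ} (hq : ‖q‖ < 1) (hq0 : q ≠ 0) (a b : Fin (n + 1) → ℂ)
    (ha : ∀ j, a j ≠ 0) (hbal : ‖(∏ j, a j)⁻¹ * (∏ j, b j)⁻¹‖ < 1) (j₀ : Fin (n + 1))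
    (hx0 : b j₀ ≠ 0) (hx : ∀ j (ν : ℕ), 1 - a j * (b j₀ * q ^ ν) ≠ 0) :
    ∑ l ∈ Finset.range (n + 1), (relPoly a b).coeff l * mom q a b (b j₀) l = 0 := by
  set x := b j₀ with hxdef
  let G : ℕ → ℂ := fun ν => wt q a b x ν / (x * q ^ ν) * ∏ j, (1 - (b j)⁻¹ * (x * q ^ ν))
  have hG0 : G 0 = 0 := by
    have : ∏ j, (1 - (b j)⁻¹ * (x * q ^ 0)) = 0 :=
      Finset.prod_eq_zero (Finset.mem_univ j₀)
        (by rw [pow_zero, mul_one, inv_mul_cancel₀ hx0, sub_self])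
    simp only [G, this, mul_zero]
  have hS : HasSum (fun ν : ℕ => ∑ l ∈ Finset.range (n + 1),
      (relPoly a b).coeff l * (wt q a b x ν * ((x * q ^ ν) ^ l / (x * q ^ ν))))
      (∑ l ∈ Finset.range (n + 1), (relPoly a b).coeff l * mom q a b x l) :=
    hasSum_sum fun l _ => (summable_mom hq hq0 a b hbal hx0 hx l).hasSum.mul_left _
  have hterm : ∀ ν : ℕ, ∑ l ∈ Finset.range (n + 1),
      (relPoly a b).coeff l * (wt q a b x ν * ((x * q ^ ν) ^ l / (x * q ^ ν))) =
      G ν - G (ν + 1) := by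
    intro ν
    have e1 : ∑ l ∈ Finset.range (n + 1),
        (relPoly a b).coeff l * (wt q a b x ν * ((x * q ^ ν) ^ l / (x * q ^ ν))) =
        wt q a b x ν / (x * q ^ ν) * (relPoly a b).eval (x * q ^ ν) := by
      rw [Polynomial.eval_eq_sum_range' (relPoly_natDegree a b ha), Finset.mul_sum]
      exact Finset.sum_congr rfl fun l _ => by ring
    have e2 : G (ν + 1) = wt q a b x ν / (x * q ^ ν) *
        ((∏ j, a j)⁻¹ * (∏ j, b j)⁻¹ * ∏ j, (1 - a j * (x * q ^ ν))) := by
      have hs := wt_step hq a b x hx ν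
      have : G (ν + 1) = wt q a b x (ν + 1) * (∏ j, (1 - (b j)⁻¹ * (x * q ^ (ν + 1)))) /
          (x * q ^ (ν + 1)) := by
        simp only [G]
        ring
      rw [this, hs, pow_succ]
      generalize ∏ j, (1 - a j * (x * q ^ ν)) = A
      field_simp
    rw [e1, e2, relPoly_eval]
    simp only [G]
    ring
  have hGlim : Filter.Tendsto G Filter.atTop (nhds 0) := by
    have h1 := (summable_mom hq hq0 a b hbal hx0 hx 0).tendsto_atTop_zero
    have h2 := h1.mul (tendsto_lattice hq (fun j => (b j)⁻¹) x)
    simpa [G, div_eq_mul_inv] using h2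
  have hpart := hS.tendsto_sum_nat
  simp only [hterm, Finset.sum_range_sub', hG0, zero_sub] at hpart
  exact tendsto_nhds_unique hpart (by simpa using hGlim.neg)

lemma mom_succ {n : ℕ} {q : ℂ} (hq0 : q ≠ 0) (a b : Fin (n + 1) → ℂ) {x : ℂ} (hx0 : x ≠ 0)
    (l : ℕ) : mom q a b x (l + 1) = ∑' ν : ℕ, wt q a b x ν * (x * q ^ ν) ^ l := by
  unfold mom
  refine tsum_congr fun ν => ?_
  rw [pow_succ, mul_div_assoc, div_self (by positivity), mul_one]

/-- The truncated sum is a determinant of one-variable moments, up to a constant that does not depend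
on `a` and `b`. -/
lemma jbarSum_eq_det {n : ℕ} (q : ℂ) (a b : Fin (n + 1) → ℂ) (i : Fin (n + 1))
    (h : ∀ (k : Fin n) (l : ℕ), Summable fun ν : ℕ =>
      wt q a b (b (i.succAbove k)) ν * (b (i.succAbove k) * q ^ ν) ^ l) :
    jbarSum q a b i = (1 - q) ^ n * ((∏ k : Fin n, ∏ _l ∈ Finset.Ioi k, (-1 : ℂ)) *
      (Matrix.of fun k l : Fin n => ∑' ν : ℕ,
        wt q a b (b (i.succAbove k)) ν * (b (i.succAbove k) * q ^ ν) ^ (l : ℕ)).det) := by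
  unfold jbarSum
  rw [← tsum_vandermonde (fun k ν => wt q a b (b (i.succAbove k)) ν)
    (fun k ν => b (i.succAbove k) * q ^ ν) fun k l _ => h k l]
  congr 1
  refine tsum_congr fun ν => ?_
  simp only [jbarTerm, wt]
  rw [Finset.prod_mul_distrib, Finset.prod_pow_eq_pow_sum]

/-- Let the moments of the weight with parameters `a'`, `b'` on the `k`-th lattice be those of
`r k * (1 - c z) / z` times the weight with parameters `a`, `b`. Then, up to explicit factors, the
two truncated sums differ by the factor `relPoly(1/c) / relPoly(0)`. -/
lemma jbarSum_shift {n : ℕ} {q : ℂ} (hq : ‖q‖ < 1) (hq0 : q ≠ 0) (a b a' b' : Fin (n + 1) → ℂ)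
    (i : Fin (n + 1)) (ha : ∀ j, a j ≠ 0) (hb : ∀ j, b j ≠ 0)
    (hbal : ‖(∏ j, a j)⁻¹ * (∏ j, b j)⁻¹‖ < 1)
    (hx : ∀ (k : Fin n) j (ν : ℕ), 1 - a j * (b (i.succAbove k) * q ^ ν) ≠ 0)
    (r : Fin n → ℂ) {c : ℂ} (hc : c ≠ 0)
    (h : ∀ (k : Fin n) (l : ℕ), HasSum (fun ν : ℕ =>
      wt q a' b' (b' (i.succAbove k)) ν * (b' (i.succAbove k) * q ^ ν) ^ l)
      (r k * (mom q a b (b (i.succAbove k)) l - c * mom q a b (b (i.succAbove k)) (l + 1)))) :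
    jbarSum q a' b' i * (1 - (∏ j, a j)⁻¹ * (∏ j, b j)⁻¹) =
      (∏ k, r k) * ((-c) ^ n * (relPoly a b).eval c⁻¹) * jbarSum q a b i := by
  have hF0 : (relPoly a b).coeff 0 = 1 - (∏ j, a j)⁻¹ * (∏ j, b j)⁻¹ := by
    rw [Polynomial.coeff_zero_eq_eval_zero, relPoly_eval]
    simp
  have hF : (relPoly a b).coeff 0 ≠ 0 := by
    rw [hF0]
    intro h0
    rw [← sub_eq_zero.1 h0] at hbal
    simp at hbal
  have hdet := det_moment_shift (fun k l => mom q a b (b (i.succAbove k)) l)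
    (fun l => (relPoly a b).coeff l) hc hF
    (fun k => mom_relation hq hq0 a b ha hbal _ (hb _) (hx k))
  rw [← Polynomial.eval_eq_sum_range' (relPoly_natDegree a b ha), hF0] at hdet
  rw [jbarSum_eq_det q a' b' i fun k l => (h k l).summable, jbarSum_eq_det q a b i fun k l => ?_]
  · simp only [(h _ _).tsum_eq]
    simp only [mom_succ hq0 a b (hb _)] at hdet ⊢
    have hrow := Matrix.det_mul_column r (Matrix.of fun k l : Fin n =>
      mom q a b (b (i.succAbove k)) l -
        c * ∑' ν : ℕ, wt q a b (b (i.succAbove k)) ν * (b (i.succAbove k) * q ^ ν) ^ (l : ℕ))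
    simp only [Matrix.of_apply] at hrow
    rw [hrow]
    linear_combination (1 - q) ^ n * (∏ k : Fin n, ∏ _l ∈ Finset.Ioi k, (-1 : ℂ)) *
      (∏ k, r k) * hdet
  · refine (summable_mom hq hq0 a b hbal (hb _) (hx k) (l + 1)).congr fun ν => ?_
    have := hb (i.succAbove k)
    rw [pow_succ, mul_div_assoc, div_self (by positivity), mul_one]

/-! ### Effect of the parameter shifts -/

lemma prod_eq_mul_of_single {ι : Type*} [Fintype ι] [DecidableEq ι] (f g : ι → ℂ) (j : ι) (s : ℂ)
    (hj : f j = s * g j) (h : ∀ k, k ≠ j → f k = g k) : ∏ k, f k = s * ∏ k, g k := by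
  rw [← Finset.mul_prod_erase _ f (Finset.mem_univ j),
    ← Finset.mul_prod_erase _ g (Finset.mem_univ j), hj, mul_assoc,
    Finset.prod_congr rfl fun k hk => h k (Finset.ne_of_mem_erase hk)]

lemma prod_update_mul {ι : Type*} [Fintype ι] [DecidableEq ι] (f : ι → ℂ) (j : ι) (s : ℂ) :
    ∏ k, Function.update f j (s * f j) k = s * ∏ k, f k :=
  prod_eq_mul_of_single _ _ j s (by simp) fun k hk => by simp [hk]

/-- Replacing `a j` by `q * a j` multiplies the weight at `z` by `x * (1 - a j * z) / z`; the factor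
`x / z = q ^ (-ν)` comes from the change of `u` to `u / q`. -/
lemma wt_update_a {n : ℕ} {q : ℂ} (hq : ‖q‖ < 1) (hq0 : q ≠ 0) (a b : Fin (n + 1) → ℂ) {x : ℂ}
    (hx0 : x ≠ 0) (hx : ∀ j (ν : ℕ), 1 - a j * (x * q ^ ν) ≠ 0) (j : Fin (n + 1)) (ν : ℕ) :
    wt q (Function.update a j (q * a j)) b x ν =
      x * (wt q a b x ν * ((1 - a j * (x * q ^ ν)) / (x * q ^ ν))) := by
  unfold wt
  rw [prod_update_mul, prod_eq_mul_of_single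
    (fun k => qp q (q * (b k)⁻¹ * (x * q ^ ν)) /
      qp q (Function.update a j (q * a j) k * (x * q ^ ν)))
    (fun k => qp q (q * (b k)⁻¹ * (x * q ^ ν)) / qp q (a k * (x * q ^ ν))) j
    (1 - a j * (x * q ^ ν))]
  · rw [show q * (q * ∏ j, a j)⁻¹ * (∏ j, b j)⁻¹ = q * (∏ j, a j)⁻¹ * (∏ j, b j)⁻¹ * q⁻¹ by
      rw [mul_inv]; ring, mul_pow, inv_pow]
    generalize ∏ k, qp q (q * (b k)⁻¹ * (x * q ^ ν)) / qp q (a k * (x * q ^ ν)) = A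
    generalize q * (∏ j, a j)⁻¹ * (∏ j, b j)⁻¹ = u
    field_simp
  · rw [Function.update_self, qp_step hq (a j * (x * q ^ ν)), ← mul_assoc q, ← div_div,
      mul_div_assoc', mul_div_assoc', mul_div_cancel_left₀ _ (hx j ν)]
  · intro k hk
    rw [Function.update_of_ne hk]

/-- Replacing `b j` by `q * b j`, with the base point `x` kept fixed, multiplies the weight at `z` by
`x * (1 - z / b j) / z`. -/
lemma wt_update_b {n : ℕ} {q : ℂ} (hq : ‖q‖ < 1) (hq0 : q ≠ 0) (a b : Fin (n + 1) → ℂ) {x : ℂ}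
    (hx0 : x ≠ 0) (j : Fin (n + 1)) (ν : ℕ) :
    wt q a (Function.update b j (q * b j)) x ν =
      x * (wt q a b x ν * ((1 - (b j)⁻¹ * (x * q ^ ν)) / (x * q ^ ν))) := by
  unfold wt
  rw [prod_update_mul, prod_eq_mul_of_single
    (fun k => qp q (q * (Function.update b j (q * b j) k)⁻¹ * (x * q ^ ν)) /
      qp q (a k * (x * q ^ ν)))
    (fun k => qp q (q * (b k)⁻¹ * (x * q ^ ν)) / qp q (a k * (x * q ^ ν))) j
    (1 - (b j)⁻¹ * (x * q ^ ν))]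
  · rw [show q * (∏ j, a j)⁻¹ * (q * ∏ j, b j)⁻¹ = q * (∏ j, a j)⁻¹ * (∏ j, b j)⁻¹ * q⁻¹ by
      rw [mul_inv]; ring, mul_pow, inv_pow]
    generalize ∏ k, qp q (q * (b k)⁻¹ * (x * q ^ ν)) / qp q (a k * (x * q ^ ν)) = A
    generalize q * (∏ j, a j)⁻¹ * (∏ j, b j)⁻¹ = u
    field_simp
  · rw [Function.update_self, show q * (q * b j)⁻¹ * (x * q ^ ν) = (b j)⁻¹ * (x * q ^ ν) by
      rw [mul_inv, mul_inv_cancel_left₀ hq0], qp_step hq ((b j)⁻¹ * (x * q ^ ν)), ← mul_assoc q]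
    simp only [mul_div_assoc, mul_assoc]
  · intro k hk
    rw [Function.update_of_ne hk]

/-- Moving the base point one step along the lattice. -/
lemma wt_base_mul {n : ℕ} (q : ℂ) (a b : Fin (n + 1) → ℂ) (x : ℂ) (ν : ℕ) :
    q * (∏ j, a j)⁻¹ * (∏ j, b j)⁻¹ * wt q a b (q * x) ν = wt q a b x (ν + 1) := by
  unfold wt
  rw [show q * x * q ^ ν = x * q ^ (ν + 1) by ring]
  ring

/-- The moments of the weight multiplied by `(1 - c z) / z`. -/
lemma hasSum_shifted {n : ℕ} {q : ℂ} (hq : ‖q‖ < 1) (hq0 : q ≠ 0) (a b : Fin (n + 1) → ℂ)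
    (hbal : ‖(∏ j, a j)⁻¹ * (∏ j, b j)⁻¹‖ < 1) {x : ℂ} (hx0 : x ≠ 0)
    (hx : ∀ j (ν : ℕ), 1 - a j * (x * q ^ ν) ≠ 0) (c : ℂ) (l : ℕ) :
    HasSum (fun ν : ℕ => wt q a b x ν * ((1 - c * (x * q ^ ν)) / (x * q ^ ν)) * (x * q ^ ν) ^ l)
      (mom q a b x l - c * mom q a b x (l + 1)) := by
  refine ((summable_mom hq hq0 a b hbal hx0 hx l).hasSum.sub
    ((summable_mom hq hq0 a b hbal hx0 hx (l + 1)).hasSum.mul_left c)).congr_fun fun ν => ?_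
  ring

/-- Quasi-periodicity of the theta Vandermonde product in the variable of index `m`. -/
lemma thetaVandermonde_update {n : ℕ} {q : ℂ} (hq : ‖q‖ < 1) (hq0 : q ≠ 0) (β : Fin n → ℂ)
    (hβ : ∀ k, β k ≠ 0) (m : Fin n) :
    ∏ k, ∏ l ∈ Finset.Ioi k, Function.update β m (q * β m) k *
        th q (Function.update β m (q * β m) l / Function.update β m (q * β m) k) =
      -(∏ k, (-(β k / β m))) * ∏ k, ∏ l ∈ Finset.Ioi k, β k * th q (β l / β k) := by
  set h : Fin n → ℂ := fun k => -(β k / β m) with hh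
  have hfac : ∀ k, ∀ l ∈ Finset.Ioi k, Function.update β m (q * β m) k *
        th q (Function.update β m (q * β m) l / Function.update β m (q * β m) k) =
      ((if k = m then h l else 1) * (if l = m then h k else 1)) * (β k * th q (β l / β k)) := by
    intro k l hl
    have hkl : k ≠ l := (Finset.mem_Ioi.1 hl).ne
    have h1 := hβ k
    have h2 := hβ l
    have h3 := hβ m
    by_cases hk : k = m
    · subst hk
      have hst := th_step hq hq0 (x := β l / (q * β k)) (by positivity)
      rw [show q * (β l / (q * β k)) = β l / β k by field_simp] at hst
      rw [Function.update_self, Function.update_of_ne hkl.symm, if_pos rfl, if_neg hkl.symm, hst]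
      simp only [hh]
      field_simp
    · by_cases hlm : l = m
      · subst hlm
        have hst := th_step hq hq0 (x := β l / β k) (by positivity)
        rw [Function.update_self, Function.update_of_ne hk, if_pos rfl, if_neg hk, mul_div_assoc,
          hst]
        simp only [hh]
        field_simp
      · simp [hk, hlm]
  rw [Finset.prod_congr rfl fun k _ => Finset.prod_congr rfl (hfac k)]
  simp only [Finset.prod_mul_distrib (s := Finset.Ioi _)]
  rw [Finset.prod_mul_distrib]
  congr 1
  rw [Finset.prod_mul_distrib]
  have e1 : ∏ k : Fin n, ∏ l ∈ Finset.Ioi k, (if k = m then h l else 1) =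
      ∏ k, if m < k then h k else 1 := by
    rw [Finset.prod_eq_single m]
    · simp only [if_true]
      rw [← Finset.prod_filter]
      congr 1
      ext l
      simp
    · intro k _ hk
      simp [hk]
    · simp
  have e2 : ∏ k : Fin n, ∏ l ∈ Finset.Ioi k, (if l = m then h k else 1) =
      ∏ k, if k < m then h k else 1 := by
    refine Finset.prod_congr rfl fun k _ => ?_
    rw [Finset.prod_ite_eq']
    simp
  have hm : h m = -1 := by simp [hh, hβ m]
  have e3 : ∏ k, h k = -1 * ∏ k, ((if m < k then h k else 1) * if k < m then h k else 1) := by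
    refine prod_eq_mul_of_single _ _ m _ (by simp [hm]) fun k hk => ?_
    rcases lt_or_gt_of_ne hk with h1 | h1
    · simp [h1, h1.not_gt]
    · simp [h1, h1.not_gt]
  rw [e1, e2, e3, Finset.prod_mul_distrib]
  ring

/-- q-difference equations for the regularized truncated dual Dixon–Anderson sum. -/
theorem jbar_reg_q_difference
    (q : ℝ) (hq0 : 0 < q) (hq1 : q < 1) (n : ℕ) (hn : 1 ≤ n)
    (a b : Fin (n + 1) → ℂ) (ha : ∀ i, a i ≠ 0) (hb : ∀ i, b i ≠ 0)
    (hbal : 1 < ‖(∏ j, a j) * ∏ j, b j‖)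
    (i : Fin (n + 1))
    (hab : ∀ j k, k ≠ i → ∀ m : ℤ, a j * b k ≠ (q : ℂ) ^ m)
    (hbb : ∀ k l, k ≠ l → k ≠ i → l ≠ i → ∀ m : ℤ, b k / b l ≠ (q : ℂ) ^ m) :
    (∀ j, jbarReg (q : ℂ) (Function.update a j ((q : ℂ) * a j)) b i =
        (∏ k, (1 - (a j)⁻¹ * (b k)⁻¹)) / (1 - (∏ k, a k)⁻¹ * (∏ k, b k)⁻¹) *
          jbarReg (q : ℂ) a b i) ∧
      ∀ j, jbarReg (q : ℂ) a (Function.update b j ((q : ℂ) * b j)) i =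
        (∏ k, (1 - (a k)⁻¹ * (b j)⁻¹)) / (1 - (∏ k, a k)⁻¹ * (∏ k, b k)⁻¹) *
          jbarReg (q : ℂ) a b i := by
  have hQ : ‖(q : ℂ)‖ < 1 := by
    rw [Complex.norm_real, Real.norm_eq_abs, abs_of_pos hq0]
    exact hq1
  have hQ0 : (q : ℂ) ≠ 0 := by exact_mod_cast hq0.ne'
  generalize (q : ℂ) = Q at *
  have hA0 : (∏ j, a j) ≠ 0 := Finset.prod_ne_zero_iff.2 fun j _ => ha j
  have hB0 : (∏ j, b j) ≠ 0 := Finset.prod_ne_zero_iff.2 fun j _ => hb j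
  have hbal' : ‖(∏ j, a j)⁻¹ * (∏ j, b j)⁻¹‖ < 1 := by
    rw [← mul_inv, norm_inv]
    exact inv_lt_one_of_one_lt₀ hbal
  have hP : 1 - (∏ j, a j)⁻¹ * (∏ j, b j)⁻¹ ≠ 0 := by
    intro h0
    rw [← sub_eq_zero.1 h0] at hbal'
    simp at hbal'
  have hx : ∀ (k : Fin n) j (ν : ℕ), 1 - a j * (b (i.succAbove k) * Q ^ ν) ≠ 0 := by
    intro k j ν h0
    refine hab j (i.succAbove k) (Fin.succAbove_ne i k) (-ν) ?_
    rw [zpow_neg, zpow_natCast]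
    refine eq_inv_of_mul_eq_one_left ?_
    linear_combination -h0
  have hprodβ : b i * ∏ k, b (i.succAbove k) = ∏ j, b j := (Fin.prod_univ_succAbove b i).symm
  have hβ0 : (∏ k, b (i.succAbove k)) ≠ 0 := Finset.prod_ne_zero_iff.2 fun k _ => hb _
  -- At `z = b j` only the second product of `relPoly` survives.
  have hFb : ∀ j, (relPoly a b).eval (b j) = (-1) ^ n * (b j) ^ (n + 1) * (∏ k, b k)⁻¹ *
      ∏ k, (1 - (a k)⁻¹ * (b j)⁻¹) := by
    intro j
    rw [relPoly_eval, Finset.prod_eq_zero (Finset.mem_univ j)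
      (by rw [inv_mul_cancel₀ (hb j), sub_self])]
    have : ∏ k, (1 - a k * b j) = (∏ k, a k) * (-b j) ^ (n + 1) *
        ∏ k, (1 - (a k)⁻¹ * (b j)⁻¹) := by
      have hc : (-b j) ^ (n + 1) = ∏ _k : Fin (n + 1), (-b j) := by simp
      rw [hc, ← Finset.prod_mul_distrib, ← Finset.prod_mul_distrib]
      refine Finset.prod_congr rfl fun k _ => ?_
      have := ha k
      have := hb j
      field_simp
      ring
    rw [this, neg_pow, pow_succ (-1 : ℂ)]
    generalize ∏ k, (1 - (a k)⁻¹ * (b j)⁻¹) = R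
    field_simp
    ring
  have hsign : ((-1 : ℂ) ^ n) ^ 2 = 1 := by
    rw [← pow_mul, mul_comm, pow_mul]
    norm_num
  refine ⟨fun j => ?_, fun j => ?_⟩
  · have hsum := jbarSum_shift hQ hQ0 a b (Function.update a j (Q * a j)) b i ha hb hbal' hx
      (fun k => b (i.succAbove k)) (ha j) (fun k l => by
        refine ((hasSum_shifted hQ hQ0 a b hbal' (hb (i.succAbove k)) (hx k) (a j) l).mul_left
          (b (i.succAbove k))).congr_fun fun ν => ?_
        rw [wt_update_a hQ hQ0 a b (hb _) (hx k)]
        ring)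
    have hF : (relPoly a b).eval (a j)⁻¹ = ∏ k, (1 - (a j)⁻¹ * (b k)⁻¹) := by
      rw [relPoly_eval, Finset.prod_eq_zero (f := fun k => 1 - a k * (a j)⁻¹) (Finset.mem_univ j)
        (by rw [mul_inv_cancel₀ (ha j), sub_self]), mul_zero, sub_zero]
      exact Finset.prod_congr rfl fun k _ => by ring
    have hth : ∏ k : Fin n, ∏ j', th Q (Function.update a j (Q * a j) j' * b (i.succAbove k)) =
        ((-a j) ^ n * ∏ k, b (i.succAbove k))⁻¹ *
          ∏ k : Fin n, ∏ j', th Q (a j' * b (i.succAbove k)) := by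
      have hc : (-a j) ^ n = ∏ _k : Fin n, (-a j) := by simp
      rw [hc, ← Finset.prod_mul_distrib, ← Finset.prod_inv_distrib, ← Finset.prod_mul_distrib]
      refine Finset.prod_congr rfl fun k _ => ?_
      refine prod_eq_mul_of_single _ _ j _ ?_ fun j' hj' => by rw [Function.update_of_ne hj']
      rw [Function.update_self, mul_assoc, th_step hQ hQ0 (mul_ne_zero (ha j) (hb _)), neg_mul,
        neg_mul, inv_neg, neg_mul]
    rw [hF] at hsum
    rw [← eq_div_iff hP] at hsum
    have hja : (-a j) ^ n ≠ 0 := pow_ne_zero _ (neg_ne_zero.2 (ha j))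
    unfold jbarReg
    rw [hth, hsum]
    simp only [div_eq_mul_inv]
    field_simp
  · rcases eq_or_ne j i with rfl | hji
    · have hup : ∀ k : Fin n, Function.update b j (Q * b j) (j.succAbove k) = b (j.succAbove k) :=
        fun k => Function.update_of_ne (Fin.succAbove_ne j k) _ _
      have hsum := jbarSum_shift hQ hQ0 a b a (Function.update b j (Q * b j)) j ha hb hbal' hx
        (fun k => b (j.succAbove k)) (inv_ne_zero (hb j)) (fun k l => by
          rw [hup]
          refine ((hasSum_shifted hQ hQ0 a b hbal' (hb (j.succAbove k)) (hx k) (b j)⁻¹ l).mul_left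
            (b (j.succAbove k))).congr_fun fun ν => ?_
          rw [wt_update_b hQ hQ0 a b (hb _)]
          ring)
      have hkey : (∏ k, b (j.succAbove k)) * ((-(b j)⁻¹) ^ n *
          ((-1) ^ n * (b j) ^ (n + 1) * (∏ k, b k)⁻¹)) = 1 := by
        have := hb j
        rw [← hprodβ, neg_pow, inv_pow]
        field_simp
        linear_combination (b j) ^ (n + 1) * hsign
      rw [inv_inv, hFb, ← eq_div_iff hP] at hsum
      unfold jbarReg
      simp only [hup]
      rw [hsum]
      simp only [div_eq_mul_inv]
      linear_combination (norm := skip) ((∏ k, (1 - (a k)⁻¹ * (b j)⁻¹)) *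
        (1 - (∏ k, a k)⁻¹ * (∏ k, b k)⁻¹)⁻¹ * (jbarSum Q a b j *
          (∏ k : Fin n, ∏ j', th Q (a j' * b (j.succAbove k))) *
          (∏ k : Fin n, ∏ l ∈ Finset.Ioi k, b (j.succAbove k) *
            th Q (b (j.succAbove l) * (b (j.succAbove k))⁻¹))⁻¹)) * hkey
      ring
    · obtain ⟨m, rfl⟩ := Fin.exists_succAbove_eq hji
      set β : Fin n → ℂ := fun k => b (i.succAbove k) with hβ
      have hup : ∀ k : Fin n, Function.update b (i.succAbove m) (Q * b (i.succAbove m))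
          (i.succAbove k) = Function.update β m (Q * β m) k := by
        intro k
        by_cases hk : k = m
        · subst hk
          simp [hβ]
        · rw [Function.update_of_ne hk, Function.update_of_ne
            (fun h => hk (Fin.succAbove_right_injective h))]
      have hsum := jbarSum_shift hQ hQ0 a b a
        (Function.update b (i.succAbove m) (Q * b (i.succAbove m))) i ha hb hbal' hx
        (fun k => (if k = m then (∏ j, a j) * ∏ j, b j else 1) * β k)
        (inv_ne_zero (hb (i.succAbove m))) (fun k l => by
          have hbase := hasSum_shifted hQ hQ0 a b hbal' (hb (i.succAbove k)) (hx k)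
            (b (i.succAbove m))⁻¹ l
          -- For `k = m` the lattice starts one step later; the omitted term at `z = b j` vanishes.
          by_cases hk : k = m
          · subst hk
            rw [Function.update_self, if_pos rfl]
            have hb0 := hb (i.succAbove k)
            have h1 := (hasSum_nat_add_iff' 1).2 hbase
            simp only [Finset.range_one, Finset.sum_singleton, pow_zero, mul_one,
              inv_mul_cancel₀ hb0, sub_self, zero_div, mul_zero, zero_mul, sub_zero] at h1
            refine (h1.mul_left ((∏ j, a j) * (∏ j, b j) * β k)).congr_fun fun ν => ?_
            rw [wt_update_b hQ hQ0 a b (mul_ne_zero hQ0 hb0), ← wt_base_mul,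
              show b (i.succAbove k) * Q ^ (ν + 1) = Q * b (i.succAbove k) * Q ^ ν by ring]
            simp only [hβ]
            field_simp
          · rw [hup, Function.update_of_ne hk, if_neg hk, one_mul]
            refine (hbase.mul_left (β k)).congr_fun fun ν => ?_
            rw [wt_update_b hQ hQ0 a b (hb _)]
            ring)
      have hr : ∏ k, ((if k = m then (∏ j, a j) * ∏ j, b j else 1) * β k) =
          (∏ j, a j) * (∏ j, b j) * ∏ k, β k := by
        rw [Finset.prod_mul_distrib, Finset.prod_ite_eq']
        simp
      have hth : ∏ k : Fin n, ∏ j', th Q (a j' * Function.update β m (Q * β m) k) =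
          (∏ j', (-(a j' * β m)⁻¹)) * ∏ k : Fin n, ∏ j', th Q (a j' * β k) := by
        refine prod_eq_mul_of_single _ _ m _ ?_ fun k hk => by rw [Function.update_of_ne hk]
        rw [← Finset.prod_mul_distrib]
        refine Finset.prod_congr rfl fun j' _ => ?_
        rw [Function.update_self, mul_left_comm, th_step hQ hQ0 (mul_ne_zero (ha j') (hb _))]
      have hD := thetaVandermonde_update hQ hQ0 β (fun k => hb _) m
      have hkey : (∏ j, a j) * (∏ j, b j) * (∏ k, β k) * ((-(β m)⁻¹) ^ n *
          ((-1) ^ n * (β m) ^ (n + 1) * (∏ k, b k)⁻¹)) * (∏ j', (-(a j' * β m)⁻¹)) *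
          (-(∏ k, (-(β k / β m))))⁻¹ = 1 := by
        have e1 : ∏ j', (-(a j' * β m)⁻¹) =
            (-1) ^ n * (-1) * ((∏ j, a j)⁻¹ * ((β m) ^ (n + 1))⁻¹) := by
          rw [Finset.prod_neg, Finset.prod_inv_distrib, Finset.prod_mul_distrib]
          simp [pow_succ]
          ring
        have e2 : ∏ k, (-(β k / β m)) = (-1) ^ n * ((∏ k, β k) / (β m) ^ n) := by
          rw [Finset.prod_neg, Finset.prod_div_distrib]
          simp
        have hm : β m ≠ 0 := hb _
        rw [e1, e2, neg_pow, inv_pow]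
        field_simp
        exact hsign
      rw [inv_inv, hFb, ← eq_div_iff hP, hr] at hsum
      unfold jbarReg
      simp only [hup]
      rw [hth, hD, hsum]
      generalize ∏ k : Fin n, ∏ l ∈ Finset.Ioi k, β k * th Q (β l / β k) = D
      generalize jbarSum Q a b i = S
      simp only [div_eq_mul_inv]
      linear_combination (norm := skip) ((∏ k, (1 - (a k)⁻¹ * (β m)⁻¹)) *
        (1 - (∏ k, a k)⁻¹ * (∏ k, b k)⁻¹)⁻¹ * (S *
          (∏ k : Fin n, ∏ j', th Q (a j' * β k)) * D⁻¹)) * hkey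
      simp only [hβ, div_eq_mul_inv]
      ring
end

section
/- Suppose q < |a_1⋯a_{n+1} b_1⋯b_{n+1}| and a_j b_k ∉ q^{−ℕ} for all 1 ≤ j ≤ n+1 and 1 ≤ k ≤ n. Then the truncated dual Dixon–Anderson sum and the truncated dual Milne–Gustafson sum are related by J̄(b̂_{n+1}) = Ī(u; (b_1,…,b_n)) · ∏_{i=1}^n (q a_i⁻¹ b_{n+1}⁻¹)_∞ / (a_{n+1} b_i)_∞, where Ī is the normalized dual Milne–Gustafson sum in the n parameters a_1,…,a_n, b_1,…,b_n. (Corollary 4.6 of the paper: the Milne–Gustafson sum as a limiting case of the Dixon–Anderson sum.) -/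
/-!
Put `A = ∏_{j≤n} a_j b_j` and, for `C = s A B`, consider the series over `ν ∈ ℕⁿ` with
`z_k = b_k q^{ν_k}`

  `G(B, s) = ∑ s^{|ν|} ∏_k [∏_{j≤n} (q z_k / b_j)_∞ / (a_j z_k)_∞ · (C z_k)_∞ / (B z_k)_∞] Δ(z)`.

For `s = u` and `B = a_{n+1}` one has `C = q / b_{n+1}` and `G` is the Dixon–Anderson sum; for
`B = 0` it is the Milne–Gustafson sum, whose terms outside `ℕⁿ` vanish. Both are evaluated in
closed form (`series_eval`) and compared.

The evaluation rests on the first-order equation (`recurrence`)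

  `(1 - s) G(B, s) = (1 - s A) ∏_i (1 - C / a_i) G(B, q s)`.

The polynomial `S(w) = ∏ (1 - w / b_j) (1 - C w) - s ∏ (1 - a_j w) (1 - B w)` has degree at most
`n` because `C = s A B`. Interpolating it at the nodes `0, z_1, …, z_n` and evaluating at `1 / C`
(`key_id`) shows that the summands of the two sides differ by `∑_k S(z_k) E_k`, where `E_k` does
not involve `z_k`. Against the weight, `S(z_k)` is a difference `K(ν) - K(ν + e_k)` with `K = 0`
at `ν_k = 0`, so these terms sum to zero (`tsum_telescope`).

Iterating the equation sends `s` to `q^N s → 0`, where by dominated convergence only the term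
`ν = 0` survives (`tendsto_series`). Hence
`(s)_∞ G(B, s) = (s A)_∞ ∏_i (C / a_i)_∞ / (B b_i)_∞ · G₀` with `G₀` independent of `B`.
-/

open scoped BigOperators
open Finset

/-- Summand of the truncated dual Jackson integral of Dixon–Anderson type
`J̄(b̂_{n+1})`, with `u = q a₁⁻¹⋯a_{n+1}⁻¹ b₁⁻¹⋯b_{n+1}⁻¹`. -/
noncomputable def jbarLastTerm {n : ℕ} (q : ℂ) (a b : Fin (n + 1) → ℂ) (ν : Fin n → ℕ) : ℂ :=
  (q * (∏ j, a j)⁻¹ * (∏ j, b j)⁻¹) ^ (∑ k, ν k) *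
    (∏ k, ∏ j, qp q (q * (b j)⁻¹ * (b (Fin.castSucc k) * q ^ ν k)) /
        qp q (a j * (b (Fin.castSucc k) * q ^ ν k))) *
    ∏ k, ∏ l ∈ Finset.Ioi k, (b (Fin.castSucc k) * q ^ ν k - b (Fin.castSucc l) * q ^ ν l)

/-- The truncated dual Jackson integral of Dixon–Anderson type `J̄(b̂_{n+1})`. -/
noncomputable def jbarLastSum {n : ℕ} (q : ℂ) (a b : Fin (n + 1) → ℂ) : ℂ :=
  (1 - q) ^ n * ∑' ν : Fin n → ℕ, jbarLastTerm q a b ν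

/-- Summand of the normalized dual Jackson integral of Milne–Gustafson type. -/
noncomputable def mgDualTerm {n : ℕ} (q s : ℂ) (a b y : Fin n → ℂ) (ν : Fin n → ℤ) : ℂ :=
  s ^ (∑ i, ν i) *
    (∏ i, ∏ j, qp q (q * (b j)⁻¹ * (y i * q ^ ν i)) / qp q (a j * (y i * q ^ ν i))) *
    ∏ i, ∏ j ∈ Finset.Ioi i, (y i * q ^ ν i - y j * q ^ ν j)

/-- The normalized dual Jackson integral of Milne–Gustafson type `Ī(s;y)`. -/
noncomputable def mgDualSum {n : ℕ} (q s : ℂ) (a b y : Fin n → ℂ) : ℂ :=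
  (1 - q) ^ n * ∑' ν : Fin n → ℤ, mgDualTerm q s a b y ν

namespace DualMG
open Filter Topology

/-! ### The infinite q-Pochhammer symbol -/

lemma summable_qpow {q : ℂ} (hq : ‖q‖ < 1) (c : ℂ) : Summable fun i : ℕ => ‖-(q ^ i * c)‖ := by
  simp only [norm_neg, norm_mul, norm_pow]
  exact (summable_geometric_of_lt_one (norm_nonneg _) hq).mul_right _

lemma multipliable_qp {q : ℂ} (hq : ‖q‖ < 1) (c : ℂ) :
    Multipliable fun i : ℕ => (1 - q ^ i * c) := by
  simpa [sub_eq_add_neg] using multipliable_one_add_of_summable (summable_qpow hq c)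

lemma qp_shift {q : ℂ} (hq : ‖q‖ < 1) (c : ℂ) : qp q c = (1 - c) * qp q (q * c) := by
  have h := (multipliable_qp hq (q * c))
  have h' : Multipliable fun i : ℕ => (1 - q ^ (i + 1) * c) := by
    convert h using 2; ring
  have := tprod_eq_zero_mul' (f := fun i : ℕ => 1 - q ^ i * c) h'
  simp only [qp]
  rw [this]
  simp only [pow_zero, one_mul]
  congr 2; ext i; ring

lemma qp_shift_nat {q : ℂ} (hq : ‖q‖ < 1) (c : ℂ) (m : ℕ) :
    qp q c = (∏ i ∈ range m, (1 - q ^ i * c)) * qp q (c * q ^ m) := by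
  induction m with
  | zero => simp
  | succ m ih =>
    rw [ih, prod_range_succ, qp_shift hq (c * q ^ m)]
    ring_nf

lemma qp_zero (q : ℂ) : qp q 0 = 1 := by simp [qp]

lemma qp_ne_zero {q : ℂ} (hq : ‖q‖ < 1) (c : ℂ) (h : ∀ m : ℕ, c * q ^ m ≠ 1) : qp q c ≠ 0 := by
  have := tprod_one_add_ne_zero_of_summable (f := fun i : ℕ => -(q ^ i * c)) (fun i hi => h i
    (by linear_combination -hi)) (summable_qpow hq c)
  simpa [qp, sub_eq_add_neg] using this

lemma qp_eq_zero {q : ℂ} (hq : ‖q‖ < 1) (c : ℂ) (m : ℕ) (h : q ^ m * c = 1) : qp q c = 0 := by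
  rw [qp_shift_nat hq c (m + 1), prod_range_succ, h]; simp

lemma qp_tendsto {q : ℂ} (hq : ‖q‖ < 1) (c : ℂ) :
    Tendsto (fun m : ℕ => qp q (c * q ^ m)) atTop (𝓝 1) := by
  have h0 : Tendsto (fun m : ℕ => ‖c * q ^ m‖) atTop (𝓝 0) := by
    have := (tendsto_pow_atTop_nhds_zero_of_norm_lt_one hq).const_mul c
    simpa using this.norm
  obtain ⟨m₀, hm₀⟩ := (h0.eventually (gt_mem_nhds one_pos)).exists
  -- Past `m₀` the argument has norm below one, so no factor vanishes there.
  have hne : qp q (c * q ^ m₀) ≠ 0 := by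
    refine qp_ne_zero hq _ fun m h => ?_
    have : ‖c * q ^ m₀ * q ^ m‖ < 1 := by
      rw [norm_mul]
      exact mul_lt_one_of_nonneg_of_lt_one_left (norm_nonneg _) hm₀
        (by rw [norm_pow]; exact pow_le_one₀ (norm_nonneg _) hq.le)
    rw [h] at this
    simp at this
  rw [← tendsto_add_atTop_iff_nat m₀]
  have h1 := (multipliable_qp hq (c * q ^ m₀)).tendsto_prod_tprod_nat
  have h2 := (tendsto_const_nhds (x := qp q (c * q ^ m₀))).div h1 hne
  rw [show qp q (c * q ^ m₀) / ∏' i : ℕ, (1 - q ^ i * (c * q ^ m₀)) = 1 from div_self hne] at h2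
  refine h2.congr fun m => ?_
  have e := qp_shift_nat hq (c * q ^ m₀) m
  have hp : ∏ i ∈ range m, (1 - q ^ i * (c * q ^ m₀)) ≠ 0 := fun h => hne (by rw [e, h, zero_mul])
  simp only [Pi.div_apply]
  rw [div_eq_iff hp, e, mul_comm, show c * q ^ m₀ * q ^ m = c * q ^ (m + m₀) by ring]

/-! ### Bounded functions and summability over `ℕⁿ` -/

/-- Boundedness of a complex-valued function on an arbitrary index type. -/
def Bd {X : Type*} (f : X → ℂ) : Prop := ∃ M, ∀ x, ‖f x‖ ≤ M

lemma Bd.mul {X : Type*} {f g : X → ℂ} (hf : Bd f) (hg : Bd g) : Bd fun x => f x * g x := by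
  obtain ⟨M, hM⟩ := hf
  obtain ⟨N, hN⟩ := hg
  refine ⟨M * N, fun x => ?_⟩
  rw [norm_mul]
  exact mul_le_mul (hM x) (hN x) (norm_nonneg _) ((norm_nonneg _).trans (hM x))

lemma Bd.sub {X : Type*} {f g : X → ℂ} (hf : Bd f) (hg : Bd g) : Bd fun x => f x - g x := by
  obtain ⟨M, hM⟩ := hf
  obtain ⟨N, hN⟩ := hg
  exact ⟨M + N, fun x => (norm_sub_le _ _).trans (add_le_add (hM x) (hN x))⟩

lemma Bd.const {X : Type*} (c : ℂ) : Bd fun _ : X => c := ⟨‖c‖, fun _ => le_rfl⟩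

lemma Bd.comp {X Y : Type*} {f : X → ℂ} (hf : Bd f) (g : Y → X) : Bd fun y => f (g y) := by
  obtain ⟨M, hM⟩ := hf
  exact ⟨M, fun x => hM _⟩

lemma Bd.prod {X ι : Type*} (s : Finset ι) {f : ι → X → ℂ} (hf : ∀ i ∈ s, Bd (f i)) :
    Bd fun x => ∏ i ∈ s, f i x := by
  classical
  induction s using Finset.induction_on with
  | empty => simpa using Bd.const 1
  | insert i s hi ih =>
    simp only [prod_insert hi]
    exact (hf i (by simp)).mul (ih fun j hj => hf j (by simp [hj]))

lemma Bd.of_tendsto {f : ℕ → ℂ} {l : ℂ} (h : Tendsto f atTop (𝓝 l)) : Bd f := by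
  obtain ⟨M, hM⟩ := (Metric.isBounded_range_of_tendsto f h).exists_norm_le
  exact ⟨M, fun x => hM _ ⟨x, rfl⟩⟩

lemma bd_qp {q : ℂ} (hq : ‖q‖ < 1) (c : ℂ) : Bd fun m : ℕ => qp q (c * q ^ m) :=
  .of_tendsto (qp_tendsto hq c)

lemma bd_qp_inv {q : ℂ} (hq : ‖q‖ < 1) (c : ℂ) : Bd fun m : ℕ => (qp q (c * q ^ m))⁻¹ :=
  .of_tendsto ((qp_tendsto hq c).inv₀ one_ne_zero)

lemma bd_pow {q : ℂ} (hq : ‖q‖ < 1) : Bd fun m : ℕ => q ^ m :=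
  .of_tendsto (tendsto_pow_atTop_nhds_zero_of_norm_lt_one hq)

lemma summable_pow_sum {r : ℝ} (h0 : 0 ≤ r) (h1 : r < 1) (n : ℕ) :
    Summable fun ν : Fin n → ℕ => r ^ (∑ k, ν k) := by
  induction n with
  | zero => exact (hasSum_fintype _).summable
  | succ n ih =>
    rw [← (Fin.consEquiv fun _ : Fin (n + 1) => ℕ).summable_iff]
    have := (summable_geometric_of_lt_one h0 h1).mul_of_nonneg ih (fun _ => pow_nonneg h0 _)
      (fun _ => pow_nonneg h0 _)
    refine this.congr fun x => ?_
    simp [Fin.sum_univ_succ, pow_add, Fin.consEquiv]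

lemma summable_of_bd {n : ℕ} {s : ℂ} (hs : ‖s‖ < 1) {f : (Fin n → ℕ) → ℂ} (hf : Bd f) :
    Summable fun ν => s ^ (∑ k, ν k) * f ν := by
  obtain ⟨M, hM⟩ := hf
  refine Summable.of_norm_bounded ((summable_pow_sum (norm_nonneg s) hs n).mul_right M) fun ν => ?_
  rw [norm_mul, norm_pow]
  exact mul_le_mul_of_nonneg_left (hM ν) (by positivity)


/-! ### The interpolation identity -/

/-- The difference product `∏_{i<j} (z_i - z_j)`. -/
def vd {n : ℕ} (z : Fin n → ℂ) : ℂ := ∏ i, ∏ j ∈ Ioi i, (z i - z j)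

/-- The cofactor of `∏_{l≠k} (z_k - z_l)` in the difference product `vd z`; it does not involve
the variable `z_k`. -/
def cof {n : ℕ} (k : Fin n) (z : Fin n → ℂ) : ℂ :=
  (-1) ^ (k : ℕ) * ∏ i ∈ univ.erase k, ∏ j ∈ (Ioi i).erase k, (z i - z j)

lemma vd_eq_cof {n : ℕ} (k : Fin n) (z : Fin n → ℂ) :
    vd z = cof k z * ∏ l ∈ univ.erase k, (z k - z l) := by
  have h1 : ∀ i ∈ univ.erase k, ∏ j ∈ Ioi i, (z i - z j)
      = (if i < k then z i - z k else 1) * ∏ j ∈ (Ioi i).erase k, (z i - z j) := by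
    intro i _
    split_ifs with h
    · rw [mul_prod_erase _ (fun j => z i - z j) (by simpa using h)]
    · rw [erase_eq_of_notMem (by simpa using h), one_mul]
  have h2 : ∏ l ∈ univ.erase k, (z k - z l)
      = (-1) ^ (k : ℕ) * (∏ l ∈ univ.erase k, (if l < k then z l - z k else 1)) *
        ∏ l ∈ Ioi k, (z k - z l) := by
    have e : univ.erase k = (Iio k).disjUnion (Ioi k) (by
        rw [Finset.disjoint_left]; intro x; simp only [mem_Iio, mem_Ioi]; exact fun h => h.not_gt) := by
      ext x; simp [lt_or_lt_iff_ne]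
    rw [e, prod_disjUnion, prod_disjUnion]
    congr 1
    rw [prod_congr rfl (g := fun l => z l - z k) (s₁ := Iio k)
        (f := fun l => if l < k then z l - z k else 1)
        (fun l hl => by simp only [mem_Iio] at hl; simp [hl]),
      prod_congr rfl (g := fun l => 1) (s₁ := Ioi k)
        (f := fun l => if l < k then z l - z k else 1)
        (fun l hl => by simp only [mem_Ioi] at hl; simp [hl.le])]
    rw [prod_const_one, mul_one]
    have : (-1 : ℂ) ^ (k : ℕ) = ∏ l ∈ Iio k, (-1 : ℂ) := by simp
    rw [this, ← prod_mul_distrib]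
    exact prod_congr rfl fun l _ => by ring
  rw [vd, ← mul_prod_erase univ _ (mem_univ k), prod_congr rfl h1, prod_mul_distrib, h2, cof]
  have : ((-1 : ℂ) ^ (k : ℕ)) * (-1) ^ (k : ℕ) = 1 := by rw [← mul_pow]; simp
  linear_combination (-(∏ j ∈ Ioi k, (z k - z j)) * (∏ i ∈ univ.erase k, if i < k then z i - z k else 1) * (∏ i ∈ univ.erase k, ∏ j ∈ (Ioi i).erase k, (z i - z j))) * this

/-- The polynomial `p(w)(1 - C w) - s r(w)(1 - B w)` in `w`, with `p(w) = ∏ (1 - w / b_j)` and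
`r(w) = ∏ (1 - a_j w)`. Multiplied by the weight `wt` it becomes a `q`-difference. -/
noncomputable def sPoly {n : ℕ} (a b : Fin n → ℂ) (s B C w : ℂ) : ℂ :=
  (∏ j, (1 - (b j)⁻¹ * w)) * (1 - C * w) - s * ((∏ j, (1 - a j * w)) * (1 - B * w))

open Polynomial in
/-- The constraint on `C` is exactly the vanishing of the coefficient of degree `n + 1`. -/
lemma sPoly_poly {n : ℕ} (a b : Fin n → ℂ) (hb : ∀ i, b i ≠ 0)
    (s B C : ℂ) (hC : C = s * ((∏ j, a j) * ∏ j, b j) * B) :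
    ∃ P : ℂ[X], P.degree < (n + 1 : ℕ) ∧ ∀ w, P.eval w = sPoly a b s B C w := by
  have hdeg : ∀ c : ℂ, (1 - Polynomial.C c * X).natDegree ≤ 1 := fun c => by compute_degree
  have hcoef : ∀ c : ℂ, (1 - Polynomial.C c * X).coeff 1 = -c := fun c => by
    simp [coeff_one]
  have hd : ∀ c : Fin n → ℂ, (∏ j, (1 - Polynomial.C (c j) * X)).natDegree ≤ n := fun c => by
    refine (natDegree_prod_le _ _).trans ((sum_le_sum fun j _ => hdeg (c j)).trans ?_)
    simp
  have hcn : ∀ c : Fin n → ℂ, (∏ j, (1 - Polynomial.C (c j) * X)).coeff n = ∏ j, (-c j) := fun c => by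
    have := coeff_prod_of_natDegree_le (s := univ) (fun j => 1 - Polynomial.C (c j) * X) 1
      (fun j _ => hdeg (c j))
    simp only [card_univ, Fintype.card_fin, mul_one, hcoef] at this
    exact this
  refine ⟨(∏ j, (1 - Polynomial.C (b j)⁻¹ * X)) * (1 - Polynomial.C C * X) -
    Polynomial.C s * ((∏ j, (1 - Polynomial.C (a j) * X)) * (1 - Polynomial.C B * X)), ?_, ?_⟩
  · rw [degree_lt_iff_coeff_zero]
    intro m hm
    have h1 : ∀ (c : Fin n → ℂ) (d : ℂ),
        ((∏ j, (1 - Polynomial.C (c j) * X)) * (1 - Polynomial.C d * X)).natDegree ≤ n + 1 :=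
      fun c d => natDegree_mul_le.trans (add_le_add (hd c) (hdeg d))
    rcases hm.eq_or_lt with rfl | hm
    · rw [coeff_sub, coeff_C_mul, coeff_mul_add_eq_of_natDegree_le (hd _) (hdeg _),
        coeff_mul_add_eq_of_natDegree_le (hd _) (hdeg _), hcn, hcn, hcoef, hcoef, prod_neg,
        prod_neg, hC, prod_inv_distrib]
      have : (∏ j, b j) ≠ 0 := prod_ne_zero_iff.2 fun j _ => hb j
      field_simp
      ring
    · rw [coeff_sub, coeff_C_mul, coeff_eq_zero_of_natDegree_lt ((h1 _ _).trans_lt hm),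
        coeff_eq_zero_of_natDegree_lt ((h1 _ _).trans_lt hm)]
      simp
  · intro w
    simp [sPoly, eval_prod]

/-- Lagrange interpolation of `sPoly` at `0, z_1, …, z_n`, evaluated at `C⁻¹` and cleared of
denominators. This is the identity `key_id` in general position. -/
lemma key_generic {n : ℕ} (a b z : Fin n → ℂ) (ha : ∀ i, a i ≠ 0) (hb : ∀ i, b i ≠ 0)
    (hz : Function.Injective z) (hz0 : ∀ i, z i ≠ 0) (s B C : ℂ) (hs : s ≠ 0) (hB : B ≠ 0)
    (hC : C = s * ((∏ j, a j) * ∏ j, b j) * B) :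
    (1 - s * ((∏ j, a j) * ∏ j, b j)) * (∏ i, (1 - C * (a i)⁻¹)) * (∏ k, z k * (b k)⁻¹) * vd z =
      (1 - s) * (∏ k, (1 - C * z k)) * vd z +
      (-1) ^ n * ∑ k, sPoly a b s B C (z k) *
        (cof k z * ∏ l ∈ univ.erase k, ((1 - C * z l) * z l)) := by
  obtain ⟨P, hP, hPe⟩ := sPoly_poly a b hb s B C hC
  have hpa : (∏ j, a j) ≠ 0 := prod_ne_zero_iff.2 fun j _ => ha j
  have hpb : (∏ j, b j) ≠ 0 := prod_ne_zero_iff.2 fun j _ => hb j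
  have hpz : (∏ j, z j) ≠ 0 := prod_ne_zero_iff.2 fun j _ => hz0 j
  have hC0 : C ≠ 0 := by rw [hC]; positivity
  -- Lagrange interpolation of `P` at the nodes `0, z_1, …, z_n`, evaluated at `C⁻¹`.
  have hv : Function.Injective (Fin.cons 0 z : Fin (n + 1) → ℂ) := by
    rw [Fin.cons_injective_iff]
    exact ⟨by rintro ⟨i, hi⟩; exact hz0 i hi, hz⟩
  have hL := congrArg (Polynomial.eval C⁻¹) (Lagrange.eq_interpolate (s := univ)
    (v := (Fin.cons 0 z : Fin (n + 1) → ℂ)) hv.injOn (by simpa using hP))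
  have herase : ∀ (i : Fin (n + 1)) (f : Fin (n + 1) → ℂ),
      ∏ j ∈ univ.erase i, f j = ∏ j, if j = i then 1 else f j := by
    intro i f
    rw [← mul_prod_erase univ (fun j => if j = i then 1 else f j) (mem_univ i), if_pos rfl, one_mul]
    exact prod_congr rfl fun j hj => by rw [if_neg (ne_of_mem_erase hj)]
  have herase' : ∀ (i : Fin n) (f : Fin n → ℂ),
      (∏ j, if j = i then 1 else f j) = ∏ j ∈ univ.erase i, f j := by
    intro i f
    rw [← mul_prod_erase univ (fun j => if j = i then 1 else f j) (mem_univ i), if_pos rfl, one_mul]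
    exact prod_congr rfl fun j hj => by rw [if_neg (ne_of_mem_erase hj)]
  simp only [Lagrange.interpolate_apply, Polynomial.eval_finsetSum, Polynomial.eval_mul,
    Polynomial.eval_C, Lagrange.basis, Polynomial.eval_prod, Lagrange.basisDivisor,
    Polynomial.eval_sub, Polynomial.eval_X, herase] at hL
  simp only [Fin.sum_univ_succ, Fin.prod_univ_succ,
    Fin.cons_zero, Fin.cons_succ, if_true, Fin.succ_ne_zero, if_false, Fin.succ_inj, hPe,
    (Fin.succ_ne_zero _).symm, one_mul, herase'] at hL
  -- The value at `0`, and the value at `C⁻¹`, where the first summand of `sPoly` vanishes.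
  have e0 : sPoly a b s B C 0 = 1 - s := by simp [sPoly]
  have eC : C ^ n * sPoly a b s B C C⁻¹ = (-1) ^ n * (1 - s * ((∏ j, a j) * ∏ j, b j)) *
      (∏ i, (1 - C * (a i)⁻¹)) * (∏ k, (b k)⁻¹) := by
    have e1 : C ^ n * ∏ j, (1 - a j * C⁻¹) = (-1) ^ n * (∏ j, a j) * ∏ i, (1 - C * (a i)⁻¹) := by
      have e2 : ∀ c : ℂ, c ^ n = ∏ _j : Fin n, c := fun c => by simp
      rw [e2, e2, ← prod_mul_distrib, ← prod_mul_distrib, ← prod_mul_distrib]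
      refine prod_congr rfl fun j _ => ?_
      have := ha j
      field_simp
      ring
    have e3 : s * (1 - B * C⁻¹) * (∏ j, a j) = -(1 - s * ((∏ j, a j) * ∏ j, b j)) * (∏ k, (b k)⁻¹) := by
      rw [hC, prod_inv_distrib]
      field_simp
      ring
    rw [sPoly, mul_inv_cancel₀ hC0]
    linear_combination (-s * (1 - B * C⁻¹)) * e1 - ((-1) ^ n * ∏ i, (1 - C * (a i)⁻¹)) * e3
  have f0 : C ^ n * ∏ j, ((0 - z j)⁻¹ * (C⁻¹ - z j)) = (-1) ^ n * (∏ k, (1 - C * z k)) * ∏ k, (z k)⁻¹ := by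
    have e2 : ∀ c : ℂ, c ^ n = ∏ _j : Fin n, c := fun c => by simp
    rw [e2, e2, ← prod_mul_distrib, ← prod_mul_distrib, ← prod_mul_distrib]
    refine prod_congr rfl fun j _ => ?_
    have := hz0 j
    rw [zero_sub, inv_neg]
    field_simp
  have fk : ∀ k, (∏ j, z j) * vd z * (C ^ n * ((z k - 0)⁻¹ * (C⁻¹ - 0) *
      ∏ j ∈ univ.erase k, ((z k - z j)⁻¹ * (C⁻¹ - z j)))) =
      cof k z * ∏ l ∈ univ.erase k, ((1 - C * z l) * z l) := by
    intro k
    have hk : C ^ n = C * ∏ l ∈ univ.erase k, C := by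
      rw [mul_prod_erase univ (fun _ => C) (mem_univ k)]; simp
    rw [vd_eq_cof k, ← mul_prod_erase univ z (mem_univ k), hk]
    have : (∏ l ∈ univ.erase k, ((1 - C * z l) * z l)) = (∏ l ∈ univ.erase k, z l) *
        (∏ l ∈ univ.erase k, (z k - z l)) * (∏ l ∈ univ.erase k, C) *
        ∏ j ∈ univ.erase k, ((z k - z j)⁻¹ * (C⁻¹ - z j)) := by
      rw [← prod_mul_distrib, ← prod_mul_distrib, ← prod_mul_distrib]
      refine prod_congr rfl fun j hj => ?_
      have : z k - z j ≠ 0 := sub_ne_zero.2 fun h => (ne_of_mem_erase hj) (hz h).symm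
      field_simp
    rw [this]
    have := hz0 k
    field_simp
    simp only [mul_zero, sub_zero]
    ring
  have hsum : (∏ j, z j) * vd z * (C ^ n * ∑ k, sPoly a b s B C (z k) * ((z k - 0)⁻¹ * (C⁻¹ - 0) *
      ∏ j ∈ univ.erase k, ((z k - z j)⁻¹ * (C⁻¹ - z j)))) =
      ∑ k, sPoly a b s B C (z k) * (cof k z * ∏ l ∈ univ.erase k, ((1 - C * z l) * z l)) := by
    simp only [mul_sum, ← fk]
    exact sum_congr rfl fun k _ => by ring
  have hzz : (∏ k, z k) * ∏ k, (z k)⁻¹ = 1 := by rw [prod_inv_distrib, mul_inv_cancel₀ hpz]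
  have hsg : ((-1 : ℂ) ^ n) * (-1) ^ n = 1 := by rw [← mul_pow]; simp
  rw [← hsum, prod_mul_distrib]
  rw [e0] at hL
  linear_combination ((-1) ^ n * (∏ j, z j) * vd z * C ^ n) * hL -
    ((-1) ^ n * (∏ j, z j) * vd z) * eC + ((1 - s) * (-1) ^ n * (∏ j, z j) * vd z) * f0 -
    ((∏ j, z j) * vd z * ((1 - s * ((∏ j, a j) * ∏ j, b j)) * (∏ i, (1 - C * (a i)⁻¹)) *
      ∏ k, (b k)⁻¹)) * hsg +
    ((1 - s) * vd z * ∏ k, (1 - C * z k)) * ((-1) ^ n * (-1) ^ n * hzz + hsg)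

/-- The identity expressing the `q`-difference equation at the level of summands: the two summands
it compares differ by a sum over `k` of terms that telescope in the `k`-th variable, since
`cof k z` and the product over `l ≠ k` do not involve `z_k`. -/
lemma key_id {n : ℕ} (a b z : Fin n → ℂ) (ha : ∀ i, a i ≠ 0) (hb : ∀ i, b i ≠ 0)
    (s B : ℂ) (hs : s ≠ 0) (C : ℂ)
    (hC : C = s * ((∏ j, a j) * ∏ j, b j) * B) :
    (1 - s * ((∏ j, a j) * ∏ j, b j)) * (∏ i, (1 - C * (a i)⁻¹)) * (∏ k, z k * (b k)⁻¹) * vd z =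
      (1 - s) * (∏ k, (1 - C * z k)) * vd z +
      (-1) ^ n * ∑ k, sPoly a b s B C (z k) *
        (cof k z * ∏ l ∈ univ.erase k, ((1 - C * z l) * z l)) := by
  -- Perturb `z` to have distinct nonzero entries and `B` to be nonzero, then pass to the limit.
  let zt : ℂ → Fin n → ℂ := fun t i => z i + t * ((i : ℕ) + 1 : ℂ)
  have hlin : ∀ c d : ℂ, (c = 0 → d ≠ 0) → ∀ᶠ t in 𝓝[≠] (0 : ℂ), c + t * d ≠ 0 := by
    intro c d h
    by_cases hc : c = 0
    · filter_upwards [self_mem_nhdsWithin] with t ht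
      rw [hc, zero_add]
      exact mul_ne_zero ht (h hc)
    · have : ContinuousAt (fun t : ℂ => c + t * d) 0 := by fun_prop
      exact (this.eventually_ne (by simpa using hc)).filter_mono nhdsWithin_le_nhds
  have h1 : ∀ᶠ t in 𝓝[≠] (0 : ℂ), ∀ i, zt t i ≠ 0 := by
    rw [eventually_all]
    exact fun i => hlin _ _ fun _ => by exact_mod_cast Nat.succ_ne_zero (i : ℕ)
  have h2 : ∀ᶠ t in 𝓝[≠] (0 : ℂ), Function.Injective (zt t) := by
    have : ∀ᶠ t in 𝓝[≠] (0 : ℂ), ∀ i j, i ≠ j → zt t i ≠ zt t j := by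
      simp only [eventually_all]
      intro i j hij
      have := hlin (z i - z j) ((i : ℕ) - (j : ℕ)) fun _ => by
        rw [sub_ne_zero]; exact_mod_cast fun h => hij (Fin.ext h)
      filter_upwards [this] with t ht h
      exact ht (by simp only [zt] at h; linear_combination h)
    filter_upwards [this] with t ht i j h
    by_contra hij
    exact ht i j hij h
  have h3 : ∀ᶠ t in 𝓝[≠] (0 : ℂ), B + t * 1 ≠ 0 := hlin _ _ fun _ => one_ne_zero
  have hev := (h1.and (h2.and h3)).mono fun t ht =>
    key_generic a b (zt t) ha hb ht.2.1 ht.1 s (B + t * 1) _ hs ht.2.2 rfl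
  have hz : zt 0 = z := by ext; simp [zt]
  subst hC
  have hcl := tendsto_nhds_unique_of_eventuallyEq
    (Continuous.tendsto ?_ 0 |>.mono_left nhdsWithin_le_nhds)
    (Continuous.tendsto ?_ 0 |>.mono_left nhdsWithin_le_nhds) hev
  · simpa [hz] using hcl
  · simp only [vd, zt]; fun_prop
  · simp only [vd, zt, sPoly, cof]; fun_prop

/-! ### The series, its q-difference equation and its value -/

/-- One-variable weight `∏_j (q b_j⁻¹ w)_∞ / (a_j w)_∞ · (C w)_∞ / (B w)_∞`. -/
noncomputable def wt {n : ℕ} (q : ℂ) (a b : Fin n → ℂ) (B C w : ℂ) : ℂ :=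
  (∏ j, qp q (q * (b j)⁻¹ * w) / qp q (a j * w)) * (qp q (C * w) / qp q (B * w))

/-- The telescoping potential `∏_j (b_j⁻¹ w)_∞ / (a_j w)_∞ · (C w)_∞ / (B w)_∞`. -/
noncomputable def pot {n : ℕ} (q : ℂ) (a b : Fin n → ℂ) (B C w : ℂ) : ℂ :=
  (∏ j, qp q ((b j)⁻¹ * w) / qp q (a j * w)) * (qp q (C * w) / qp q (B * w))

/-- Summand of a family of series containing both sums of the theorem: with `A = ∏ a_j b_j` and
`C = s A B`, the choice `B = a_{n+1}` gives the Dixon–Anderson sum and `B = 0` (hence `C = 0`) the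
Milne–Gustafson sum. The constraint on `C` is imposed only in the lemmas that need it. -/
noncomputable def gaussTerm {n : ℕ} (q : ℂ) (a b : Fin n → ℂ) (B s C : ℂ) (ν : Fin n → ℕ) : ℂ :=
  s ^ (∑ k, ν k) * ((∏ k, wt q a b B C (b k * q ^ ν k)) * vd fun k => b k * q ^ ν k)

lemma wt_mul_sPoly {n : ℕ} {q : ℂ} (hq : ‖q‖ < 1) (a b : Fin n → ℂ) (s B C w : ℂ)
    (haw : ∀ j, 1 - a j * w ≠ 0) (hBw : 1 - B * w ≠ 0) :
    wt q a b B (q * C) w * sPoly a b s B C w =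
      pot q a b B C w - s * pot q a b B C (w * q) := by
  have e1 : pot q a b B C w =
      wt q a b B (q * C) w * ((∏ j, (1 - (b j)⁻¹ * w)) * (1 - C * w)) := by
    rw [pot, wt, mul_mul_mul_comm, ← prod_mul_distrib]
    congr 1
    · refine prod_congr rfl fun j _ => ?_
      rw [qp_shift hq ((b j)⁻¹ * w)]
      ring_nf
    · rw [qp_shift hq (C * w)]
      ring_nf
  have e2 : pot q a b B C (w * q) =
      wt q a b B (q * C) w * ((∏ j, (1 - a j * w)) * (1 - B * w)) := by
    rw [pot, wt, mul_mul_mul_comm, ← prod_mul_distrib]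
    congr 1
    · refine prod_congr rfl fun j _ => ?_
      rw [qp_shift hq (a j * w), show (b j)⁻¹ * (w * q) = q * (b j)⁻¹ * w by ring,
        show a j * (w * q) = q * (a j * w) by ring, div_mul_eq_mul_div, mul_comm (qp q _) (1 - _),
        mul_div_mul_left _ _ (haw j)]
    · rw [qp_shift hq (B * w), show C * (w * q) = q * C * w by ring,
        show B * (w * q) = q * (B * w) by ring, div_mul_eq_mul_div, mul_comm (qp q _) (1 - _),
        mul_div_mul_left _ _ hBw]
  rw [e1, e2, sPoly]
  ring

lemma wt_split {n : ℕ} {q : ℂ} (hq : ‖q‖ < 1) (a b : Fin n → ℂ) (B C w : ℂ) :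
    wt q a b B C w = wt q a b B (q * C) w * (1 - C * w) := by
  rw [wt, wt, qp_shift hq (C * w), show q * C * w = q * (C * w) by ring]
  ring

lemma bd_qp' {q : ℂ} (hq : ‖q‖ < 1) (c d : ℂ) : Bd fun m : ℕ => qp q (c * (d * q ^ m)) := by
  simpa only [mul_assoc] using bd_qp hq (c * d)

lemma bd_qp_inv' {q : ℂ} (hq : ‖q‖ < 1) (c d : ℂ) :
    Bd fun m : ℕ => (qp q (c * (d * q ^ m)))⁻¹ := by
  simpa only [mul_assoc] using bd_qp_inv hq (c * d)

lemma bd_wt {n : ℕ} {q : ℂ} (hq : ‖q‖ < 1) (a b : Fin n → ℂ) (B C d : ℂ) :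
    Bd fun m : ℕ => wt q a b B C (d * q ^ m) := by
  simp only [wt, div_eq_mul_inv]
  exact (Bd.prod _ fun j _ => (bd_qp' hq _ d).mul (bd_qp_inv' hq _ d)).mul
    ((bd_qp' hq _ d).mul (bd_qp_inv' hq _ d))

lemma bd_pot {n : ℕ} {q : ℂ} (hq : ‖q‖ < 1) (a b : Fin n → ℂ) (B C d : ℂ) :
    Bd fun m : ℕ => pot q a b B C (d * q ^ m) := by
  simp only [pot, div_eq_mul_inv]
  exact (Bd.prod _ fun j _ => (bd_qp' hq _ d).mul (bd_qp_inv' hq _ d)).mul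
    ((bd_qp' hq _ d).mul (bd_qp_inv' hq _ d))

lemma bd_z {n : ℕ} {q : ℂ} (hq : ‖q‖ < 1) (b : Fin n → ℂ) (k : Fin n) :
    Bd fun ν : Fin n → ℕ => b k * q ^ ν k :=
  (Bd.const _).mul ((bd_pow hq).comp fun ν : Fin n → ℕ => ν k)

lemma bd_vd {n : ℕ} {q : ℂ} (hq : ‖q‖ < 1) (b : Fin n → ℂ) :
    Bd fun ν : Fin n → ℕ => vd fun k => b k * q ^ ν k :=
  Bd.prod _ fun i _ => Bd.prod _ fun j _ => (bd_z hq b i).sub (bd_z hq b j)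

lemma summable_term {n : ℕ} {q : ℂ} (hq : ‖q‖ < 1) (a b : Fin n → ℂ) (B C : ℂ) {s : ℂ}
    (hs : ‖s‖ < 1) : Summable (gaussTerm q a b B s C) :=
  summable_of_bd hs ((Bd.prod _ fun k _ =>
    (bd_wt hq a b B C (b k)).comp fun ν : Fin n → ℕ => ν k).mul (bd_vd hq b))

/-- The part of the telescoping summand in direction `k` that does not involve `ν_k`. -/
noncomputable def side {n : ℕ} (q : ℂ) (a b : Fin n → ℂ) (B C : ℂ) (k : Fin n)
    (ν : Fin n → ℕ) : ℂ :=
  (∏ l ∈ univ.erase k, wt q a b B (q * C) (b l * q ^ ν l)) *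
    (cof k (fun i => b i * q ^ ν i) *
      ∏ l ∈ univ.erase k, ((1 - C * (b l * q ^ ν l)) * (b l * q ^ ν l)))

lemma bd_side {n : ℕ} {q : ℂ} (hq : ‖q‖ < 1) (a b : Fin n → ℂ) (B C : ℂ) (k : Fin n) :
    Bd (side q a b B C k) :=
  (Bd.prod _ fun l _ => (bd_wt hq a b B (q * C) (b l)).comp fun ν : Fin n → ℕ => ν l).mul
    (((Bd.const _).mul (Bd.prod _ fun i _ => Bd.prod _ fun j _ =>
      (bd_z hq b i).sub (bd_z hq b j))).mul
    (Bd.prod _ fun l _ => ((Bd.const 1).sub ((Bd.const C).mul (bd_z hq b l))).mul (bd_z hq b l)))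

lemma side_update {n : ℕ} (q : ℂ) (a b : Fin n → ℂ) (B C : ℂ) (k : Fin n)
    (ν : Fin n → ℕ) (m : ℕ) :
    side q a b B C k (Function.update ν k m) = side q a b B C k ν := by
  have h : ∀ l, l ≠ k → Function.update ν k m l = ν l := fun l hl => Function.update_of_ne hl _ _
  rw [side, side, cof, cof]
  congr 1
  · exact prod_congr rfl fun l hl => by rw [h l (ne_of_mem_erase hl)]
  congr 1
  · congr 1
    refine prod_congr rfl fun i hi => prod_congr rfl fun j hj => ?_
    rw [h i (ne_of_mem_erase hi), h j (ne_of_mem_erase hj)]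
  · exact prod_congr rfl fun l hl => by rw [h l (ne_of_mem_erase hl)]

/-- Telescoping in direction `k`: the summand is a difference `K(ν) - K(ν + e_k)` where `K` is
summable and vanishes at `ν_k = 0`, because `(b_k⁻¹ b_k)_∞ = 0`. -/
lemma tsum_telescope {n : ℕ} {q : ℂ} (hq : ‖q‖ < 1) (a b : Fin n → ℂ) (hb : ∀ i, b i ≠ 0)
    (B C : ℂ) {s : ℂ} (hs : ‖s‖ < 1)
    (hab : ∀ j k (m : ℕ), a j * (b k * q ^ m) ≠ 1) (hBb : ∀ k (m : ℕ), B * (b k * q ^ m) ≠ 1)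
    (k : Fin n) :
    HasSum (fun ν : Fin n → ℕ => s ^ (∑ l, ν l) *
      (wt q a b B (q * C) (b k * q ^ ν k) * sPoly a b s B C (b k * q ^ ν k) *
        side q a b B C k ν)) 0 := by
  let K : (Fin n → ℕ) → ℂ := fun ν =>
    s ^ (∑ l, ν l) * (pot q a b B C (b k * q ^ ν k) * side q a b B C k ν)
  let sh : (Fin n → ℕ) → (Fin n → ℕ) := fun ν => Function.update ν k (ν k + 1)
  have hK : Summable K := summable_of_bd hs
    (((bd_pot hq a b B C (b k)).comp fun ν : Fin n → ℕ => ν k).mul (bd_side hq a b B C k))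
  have hinj : Function.Injective sh := by
    intro ν μ h
    ext l
    have := congrFun h l
    by_cases hl : l = k
    · subst hl; simpa [sh] using this
    · simpa [sh, hl] using this
  have hsupp : Function.support K ⊆ Set.range sh := by
    intro ν hν
    have h0 : ν k ≠ 0 := by
      intro h0
      apply hν
      have : pot q a b B C (b k * q ^ ν k) = 0 := by
        rw [pot, h0, prod_eq_zero (mem_univ k), zero_mul]
        rw [pow_zero, mul_one, inv_mul_cancel₀ (hb k), qp_eq_zero hq 1 0 (by simp), zero_div]
      simp [K, this]
    refine ⟨Function.update ν k (ν k - 1), ?_⟩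
    simp [sh, Nat.sub_add_cancel (Nat.one_le_iff_ne_zero.2 h0)]
  have hsum : ∀ ν : Fin n → ℕ, ∑ l, sh ν l = (∑ l, ν l) + 1 := by
    intro ν
    rw [← add_sum_erase univ _ (mem_univ k), ← add_sum_erase univ ν (mem_univ k)]
    rw [sum_congr rfl (g := ν) (fun l hl => Function.update_of_ne (ne_of_mem_erase hl) _ _)]
    simp only [sh, Function.update_self]
    ring
  have h2 : HasSum (fun ν => K (sh ν)) (∑' ν, K ν) :=
    (hinj.hasSum_iff (fun x hx => by_contra fun h => hx (hsupp h))).2 hK.hasSum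
  have h3 := hK.hasSum.sub h2
  rw [sub_self] at h3
  refine h3.congr_fun fun ν => ?_
  simp only [K, hsum]
  rw [wt_mul_sPoly hq a b s B C _ (fun j => sub_ne_zero.2 (hab j k _).symm)
    (sub_ne_zero.2 (hBb k _).symm)]
  simp only [sh]
  rw [side_update, Function.update_self, pow_succ q, ← mul_assoc (b k)]
  ring

lemma term_eq {n : ℕ} {q : ℂ} (hq : ‖q‖ < 1) (a b : Fin n → ℂ) (B s C : ℂ) (ν : Fin n → ℕ) :
    gaussTerm q a b B s C ν = s ^ (∑ k, ν k) * ((∏ k, wt q a b B (q * C) (b k * q ^ ν k)) *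
      ((∏ k, (1 - C * (b k * q ^ ν k))) * vd fun k => b k * q ^ ν k)) := by
  rw [gaussTerm, prod_congr rfl fun k _ => wt_split hq a b B C (b k * q ^ ν k), prod_mul_distrib]
  ring

lemma term_eq' {n : ℕ} (q : ℂ) (a b : Fin n → ℂ) (hb : ∀ i, b i ≠ 0) (B s C : ℂ)
    (ν : Fin n → ℕ) :
    gaussTerm q a b B (q * s) (q * C) ν =
      s ^ (∑ k, ν k) * ((∏ k, wt q a b B (q * C) (b k * q ^ ν k)) *
      ((∏ k, b k * q ^ ν k * (b k)⁻¹) * vd fun k => b k * q ^ ν k)) := by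
  have : ∏ k, b k * q ^ ν k * (b k)⁻¹ = q ^ (∑ k, ν k) := by
    rw [← prod_pow_eq_pow_sum]
    refine prod_congr rfl fun k _ => ?_
    have := hb k
    field_simp
  rw [gaussTerm, this, mul_pow]
  ring

/-- First-order `q`-difference equation of the series in `s`. -/
lemma recurrence {n : ℕ} {q : ℂ} (hq : ‖q‖ < 1) (a b : Fin n → ℂ) (ha : ∀ i, a i ≠ 0)
    (hb : ∀ i, b i ≠ 0) (B C : ℂ) {s : ℂ} (hs0 : s ≠ 0) (hs : ‖s‖ < 1)
    (hC : C = s * ((∏ j, a j) * ∏ j, b j) * B)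
    (hab : ∀ j k (m : ℕ), a j * (b k * q ^ m) ≠ 1) (hBb : ∀ k (m : ℕ), B * (b k * q ^ m) ≠ 1) :
    (1 - s) * ∑' ν, gaussTerm q a b B s C ν =
      (1 - s * ((∏ j, a j) * ∏ j, b j)) * (∏ i, (1 - C * (a i)⁻¹)) *
        ∑' ν, gaussTerm q a b B (q * s) (q * C) ν := by
  have hqs : ‖q * s‖ < 1 := by
    rw [norm_mul]; exact mul_lt_one_of_nonneg_of_lt_one_left (norm_nonneg _) hq hs.le
  have h1 := (summable_term hq a b B C hs).hasSum.mul_left (1 - s)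
  have h2 := (summable_term hq a b B (q * C) hqs).hasSum.mul_left
    ((1 - s * ((∏ j, a j) * ∏ j, b j)) * (∏ i, (1 - C * (a i)⁻¹)))
  have h3 := (hasSum_sum fun k (_ : k ∈ univ) =>
    tsum_telescope hq a b hb B C hs hab hBb k).mul_left ((-1) ^ n)
  rw [sum_const_zero, mul_zero] at h3
  have h4 := h1.add h3
  rw [add_zero] at h4
  refine h4.unique (h2.congr_fun fun ν => ?_)
  have key := key_id a b (fun k => b k * q ^ ν k) ha hb s B hs0 C hC
  have hk : ∀ k, s ^ (∑ l, ν l) *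
      (wt q a b B (q * C) (b k * q ^ ν k) * sPoly a b s B C (b k * q ^ ν k) *
        side q a b B C k ν) = s ^ (∑ l, ν l) * (∏ k, wt q a b B (q * C) (b k * q ^ ν k)) *
        (sPoly a b s B C (b k * q ^ ν k) * (cof k (fun i => b i * q ^ ν i) *
          ∏ l ∈ univ.erase k, ((1 - C * (b l * q ^ ν l)) * (b l * q ^ ν l)))) := by
    intro k
    rw [side, ← mul_prod_erase univ (fun k => wt q a b B (q * C) (b k * q ^ ν k)) (mem_univ k)]
    ring
  rw [sum_congr rfl fun k _ => hk k, ← mul_sum, term_eq hq, term_eq' q a b hb]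
  linear_combination -(s ^ (∑ l, ν l) * (∏ k, wt q a b B (q * C) (b k * q ^ ν k))) * key

/-- As `N → ∞` only the term `ν = 0` survives in the series with `s, C` replaced by
`q^N s, q^N C`. -/
lemma tendsto_series {n : ℕ} {q : ℂ} (hq : ‖q‖ < 1) (a b : Fin n → ℂ) (B C : ℂ) {s : ℂ}
    (hs : ‖s‖ < 1) :
    Tendsto (fun N : ℕ => ∑' ν, gaussTerm q a b B (q ^ N * s) (q ^ N * C) ν) atTop
      (𝓝 ((∏ k, wt q a b B 0 (b k)) * vd b)) := by
  have hC : ∀ d, Tendsto (fun N : ℕ => qp q (q ^ N * C * d)) atTop (𝓝 (qp q (0 * d))) := by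
    intro d
    rw [zero_mul, qp_zero]
    exact (qp_tendsto hq (C * d)).congr fun N => by ring_nf
  have hw : ∀ d, Tendsto (fun N : ℕ => wt q a b B (q ^ N * C) d) atTop (𝓝 (wt q a b B 0 d)) :=
    fun d => ((hC d).div_const _).const_mul _
  obtain ⟨M, hM⟩ : Bd fun x : ℕ × (Fin n → ℕ) =>
      (∏ k, wt q a b B (q ^ x.1 * C) (b k * q ^ x.2 k)) * vd fun k => b k * q ^ x.2 k := by
    refine (Bd.prod _ fun k _ => ?_).mul ((bd_vd hq b).comp Prod.snd)
    simp only [wt, div_eq_mul_inv]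
    refine ((Bd.prod _ fun j _ => (bd_qp' hq _ (b k)).mul (bd_qp_inv' hq _ (b k))).comp
      fun x : ℕ × (Fin n → ℕ) => x.2 k).mul
      (Bd.mul ?_ ((bd_qp_inv' hq B (b k)).comp fun x : ℕ × (Fin n → ℕ) => x.2 k))
    obtain ⟨M, hM⟩ := bd_qp hq (C * b k)
    refine ⟨M, fun x => ?_⟩
    have := hM (x.1 + x.2 k)
    beta_reduce at this ⊢
    rwa [show C * b k * q ^ (x.1 + x.2 k) = q ^ x.1 * C * (b k * q ^ x.2 k) by ring] at this
  have hlim : ((∏ k, wt q a b B 0 (b k)) * vd b) = ∑' ν : Fin n → ℕ,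
      (if ν = 0 then (∏ k, wt q a b B 0 (b k)) * vd b else 0) := by rw [tsum_ite_eq]
  rw [hlim]
  refine tendsto_tsum_of_dominated_convergence
    ((summable_pow_sum (norm_nonneg s) hs n).mul_right M) (fun ν => ?_)
    (Eventually.of_forall fun N ν => ?_)
  · have hp : Tendsto (fun N : ℕ => (∏ k, wt q a b B (q ^ N * C) (b k * q ^ ν k)) *
        vd fun k => b k * q ^ ν k) atTop (𝓝 ((∏ k, wt q a b B 0 (b k * q ^ ν k)) *
        vd fun k => b k * q ^ ν k)) :=
      (tendsto_finsetProd _ fun k _ => hw _).mul_const _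
    split_ifs with h
    · subst h
      simpa [gaussTerm] using hp
    · have h0 : ∑ k, ν k ≠ 0 := by
        intro h0
        exact h (funext fun k => by simpa using (sum_eq_zero_iff.1 h0) k (mem_univ k))
      have hqN : Tendsto (fun N : ℕ => (q ^ N * s) ^ (∑ k, ν k)) atTop (𝓝 0) := by
        have := ((tendsto_pow_atTop_nhds_zero_of_norm_lt_one hq).mul_const s).pow (∑ k, ν k)
        rwa [zero_mul, zero_pow h0] at this
      simpa [gaussTerm] using hqN.mul hp
  · rw [gaussTerm, norm_mul, norm_pow, norm_mul, norm_pow]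
    refine mul_le_mul (pow_le_pow_left₀ (by positivity) ?_ _) (hM (N, ν)) (norm_nonneg _)
      (by positivity)
    exact mul_le_of_le_one_left (norm_nonneg _) (pow_le_one₀ (norm_nonneg _) hq.le)

/-- Closed form of the series: the multivariable `q`-Gauss sum, and for `B = 0` the multivariable
`q`-binomial theorem. -/
lemma series_eval {n : ℕ} {q : ℂ} (hq0 : q ≠ 0) (hq : ‖q‖ < 1) (a b : Fin n → ℂ)
    (ha : ∀ i, a i ≠ 0) (hb : ∀ i, b i ≠ 0) (B C : ℂ) {s : ℂ} (hs0 : s ≠ 0) (hs : ‖s‖ < 1)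
    (hC : C = s * ((∏ j, a j) * ∏ j, b j) * B)
    (hab : ∀ j k (m : ℕ), a j * (b k * q ^ m) ≠ 1) (hBb : ∀ k (m : ℕ), B * (b k * q ^ m) ≠ 1) :
    qp q s * ∑' ν, gaussTerm q a b B s C ν =
      qp q (s * ((∏ j, a j) * ∏ j, b j)) * (∏ i, qp q (C * (a i)⁻¹)) *
        ((∏ k, wt q a b B 0 (b k)) * vd b) := by
  set A := (∏ j, a j) * ∏ j, b j with hA
  have hN : ∀ N : ℕ, (∏ m ∈ range N, (1 - q ^ m * s)) * ∑' ν, gaussTerm q a b B s C ν =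
      (∏ m ∈ range N, (1 - q ^ m * (s * A))) *
      (∏ i, ∏ m ∈ range N, (1 - q ^ m * (C * (a i)⁻¹))) *
        ∑' ν, gaussTerm q a b B (q ^ N * s) (q ^ N * C) ν := by
    intro N
    induction N with
    | zero => simp
    | succ N ih =>
      have hlt : ‖q ^ N * s‖ < 1 := by
        rw [norm_mul, norm_pow]
        exact mul_lt_one_of_nonneg_of_lt_one_right (pow_le_one₀ (norm_nonneg _) hq.le)
          (norm_nonneg _) hs
      have r := recurrence hq a b ha hb B (q ^ N * C) (mul_ne_zero (pow_ne_zero N hq0) hs0) hlt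
        (by rw [hC]; ring) hab hBb
      rw [← hA] at r
      simp only [prod_range_succ, prod_mul_distrib]
      rw [show q ^ (N + 1) * s = q * (q ^ N * s) by ring,
        show q ^ (N + 1) * C = q * (q ^ N * C) by ring, mul_right_comm, ih]
      have e : ∏ i, (1 - q ^ N * (C * (a i)⁻¹)) = ∏ i, (1 - q ^ N * C * (a i)⁻¹) :=
        prod_congr rfl fun i _ => by ring
      rw [e]
      linear_combination ((∏ m ∈ range N, (1 - q ^ m * (s * A))) *
        (∏ i, ∏ m ∈ range N, (1 - q ^ m * (C * (a i)⁻¹)))) * r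
  have t1 := ((multipliable_qp hq s).tendsto_prod_tprod_nat).mul_const
    (∑' ν, gaussTerm q a b B s C ν)
  have t2 := (((multipliable_qp hq (s * A)).tendsto_prod_tprod_nat).mul
    (tendsto_finsetProd univ fun i _ =>
      (multipliable_qp hq (C * (a i)⁻¹)).tendsto_prod_tprod_nat)).mul
    (tendsto_series hq a b B C hs)
  exact tendsto_nhds_unique t1 (t2.congr fun N => (hN N).symm)

end DualMG

/-! ### The two sums -/

/-- The truncated dual Dixon–Anderson sum in terms of the truncated dual
Milne–Gustafson sum (Corollary 4.6). -/
theorem jbar_last_eq_mg_dual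
    (q : ℝ) (hq0 : 0 < q) (hq1 : q < 1) (n : ℕ) (hn : 1 ≤ n)
    (a b : Fin (n + 1) → ℂ) (ha : ∀ i, a i ≠ 0) (hb : ∀ i, b i ≠ 0)
    (hbal : (q : ℝ) < ‖(∏ j, a j) * ∏ j, b j‖)
    (hab : ∀ (j : Fin (n + 1)) (k : Fin n) (m : ℕ),
      a j * b (Fin.castSucc k) ≠ ((q : ℂ) ^ m)⁻¹) :
    jbarLastSum (q : ℂ) a b =
      mgDualSum (q : ℂ) ((q : ℂ) * (∏ j, a j)⁻¹ * (∏ j, b j)⁻¹)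
          (fun k => a (Fin.castSucc k)) (fun k => b (Fin.castSucc k))
          (fun k => b (Fin.castSucc k)) *
        ∏ i : Fin n, qp (q : ℂ) ((q : ℂ) * (a (Fin.castSucc i))⁻¹ * (b (Fin.last n))⁻¹) /
          qp (q : ℂ) (a (Fin.last n) * b (Fin.castSucc i)) := by
  have hQ0 : (q : ℂ) ≠ 0 := by exact_mod_cast hq0.ne'
  have hQ : ‖(q : ℂ)‖ < 1 := by simpa [abs_of_pos hq0] using hq1
  set s : ℂ := (q : ℂ) * (∏ j, a j)⁻¹ * (∏ j, b j)⁻¹ with hs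
  have hpa : (∏ j, a j) ≠ 0 := prod_ne_zero_iff.2 fun j _ => ha j
  have hpb : (∏ j, b j) ≠ 0 := prod_ne_zero_iff.2 fun j _ => hb j
  have hs0 : s ≠ 0 := by rw [hs]; positivity
  have hs1 : ‖s‖ < 1 := by
    rw [hs, mul_assoc, ← mul_inv, ← div_eq_mul_inv, norm_div, div_lt_one (hq0.trans hbal)]
    simpa [abs_of_pos hq0] using hbal
  set a' : Fin n → ℂ := fun k => a (Fin.castSucc k) with ha'
  set b' : Fin n → ℂ := fun k => b (Fin.castSucc k) with hb'
  set B : ℂ := a (Fin.last n) with hB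
  set C : ℂ := (q : ℂ) * (b (Fin.last n))⁻¹ with hC
  have hCs : C = s * ((∏ j, a' j) * ∏ j, b' j) * B := by
    rw [Fin.prod_univ_castSucc] at hpa hpb
    rw [hs, Fin.prod_univ_castSucc, Fin.prod_univ_castSucc]
    have h1 := left_ne_zero_of_mul hpa
    have h2 := left_ne_zero_of_mul hpb
    have h3 := right_ne_zero_of_mul hpa
    have h4 := right_ne_zero_of_mul hpb
    simp only [ha', hb', hC, hB]
    field_simp
  have hne : ∀ j (k : Fin n) (m : ℕ), a j * (b' k * (q : ℂ) ^ m) ≠ 1 := by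
    intro j k m h
    exact hab j k m (eq_inv_of_mul_eq_one_left (by rw [← h, mul_assoc]))
  -- The two series are the cases `B = a_{n+1}`, `C = q / b_{n+1}` and `B = C = 0` of one family.
  have hJ : ∀ ν, jbarLastTerm (q : ℂ) a b ν = DualMG.gaussTerm q a' b' B s C ν := by
    intro ν
    rw [jbarLastTerm, DualMG.gaussTerm, ← hs, mul_assoc]
    simp only [Fin.prod_univ_castSucc (n := n), DualMG.wt, DualMG.vd]
    rfl
  have hMG : ∑' ν : Fin n → ℤ, mgDualTerm (q : ℂ) s a' b' b' ν =
      ∑' ν, DualMG.gaussTerm q a' b' 0 s 0 ν := by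
    let e : (Fin n → ℕ) → (Fin n → ℤ) := fun ν k => (ν k : ℤ)
    have he : Function.Injective e := fun ν μ h => funext fun k => by
      simpa [e] using congrFun h k
    rw [← he.tsum_eq]
    · refine tsum_congr fun ν => ?_
      rw [mgDualTerm, DualMG.gaussTerm, mul_assoc]
      simp only [e, DualMG.wt, DualMG.vd, zpow_natCast, ← Nat.cast_sum, zero_mul, DualMG.qp_zero,
        div_one, mul_one]
    · intro ν hν
      have hpos : ∀ k, 0 ≤ ν k := by
        intro k
        by_contra hk
        push Not at hk
        apply hν
        obtain ⟨m, hm⟩ : ∃ m : ℕ, ν k = -((m : ℤ) + 1) :=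
          ⟨(-ν k - 1).toNat, by rw [Int.toNat_of_nonneg (by omega)]; ring⟩
        have hz : qp (q : ℂ) ((q : ℂ) * (b' k)⁻¹ * (b' k * (q : ℂ) ^ ν k)) = 0 := by
          refine DualMG.qp_eq_zero hQ _ m ?_
          have hbk : b' k ≠ 0 := hb _
          rw [hm, zpow_neg, zpow_add₀ hQ0, zpow_natCast, zpow_one]
          field_simp
        have : ∏ i, ∏ j, qp (q : ℂ) ((q : ℂ) * (b' j)⁻¹ * (b' i * (q : ℂ) ^ ν i)) /
            qp (q : ℂ) (a' j * (b' i * (q : ℂ) ^ ν i)) = 0 :=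
          prod_eq_zero (mem_univ k) (prod_eq_zero (mem_univ k) (by rw [hz, zero_div]))
        rw [mgDualTerm, this, mul_zero, zero_mul]
      exact ⟨fun k => (ν k).toNat, funext fun k => Int.toNat_of_nonneg (hpos k)⟩
  have g1 := DualMG.series_eval hQ0 hQ a' b' (fun i => ha _) (fun i => hb _) B C hs0 hs1 hCs
    (fun j k m => hne _ k m) (fun k m => hne _ k m)
  have g2 := DualMG.series_eval hQ0 hQ a' b' (fun i => ha _) (fun i => hb _) 0 0 hs0 hs1 (by simp)
    (fun j k m => hne _ k m) (fun k m => by simp)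
  -- `(s)_∞ ≠ 0` because `|s| < 1`, so it may be cancelled between the two evaluations.
  have hqs : qp (q : ℂ) s ≠ 0 := by
    refine DualMG.qp_ne_zero hQ s fun m h => ?_
    have : ‖s * (q : ℂ) ^ m‖ < 1 := by
      rw [norm_mul, norm_pow]
      exact mul_lt_one_of_nonneg_of_lt_one_left (norm_nonneg _) hs1
        (pow_le_one₀ (norm_nonneg _) hQ.le)
    rw [h] at this
    simp at this
  rw [jbarLastSum, mgDualSum, hMG, tsum_congr hJ, mul_assoc]
  congr 1
  refine mul_left_cancel₀ hqs ?_
  have e1 : ∏ k, DualMG.wt (q : ℂ) a' b' B 0 (b' k) =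
      (∏ k, DualMG.wt (q : ℂ) a' b' 0 0 (b' k)) * ∏ k, (qp (q : ℂ) (B * b' k))⁻¹ := by
    rw [← prod_mul_distrib]
    refine prod_congr rfl fun k _ => ?_
    simp [DualMG.wt, DualMG.qp_zero]
  have e2 : ∏ i, qp (q : ℂ) ((q : ℂ) * (a' i)⁻¹ * (b (Fin.last n))⁻¹) / qp (q : ℂ) (B * b' i) =
      (∏ i, qp (q : ℂ) (C * (a' i)⁻¹)) * ∏ k, (qp (q : ℂ) (B * b' k))⁻¹ := by
    rw [← prod_mul_distrib]
    refine prod_congr rfl fun k _ => ?_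
    rw [div_eq_mul_inv, hC, mul_right_comm]
  rw [g1, ← mul_assoc (qp (q : ℂ) s), g2, e1]
  refine Eq.trans ?_ (congrArg _ e2.symm)
  simp only [zero_mul, DualMG.qp_zero, prod_const_one]
  ring
end
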